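/- arXiv:math/0610334 — 2 statements merged into one kernel-verified Lean document; each statement's English description precedes it below -/
import Mathlib

section
/- For every integer d ≥ 2 and every ε > 0 there exists a translation-equivariant matching rule Φ such that E[Z_Φ^{2/3 − ε}] < ∞. -/
open MeasureTheory ENNReal

noncomputable section

/-- Sites: the lattice `ℤ^d`. -/
abbrev Site (d : ℕ) := Fin d → ℤ

/-- Configurations: elements of `{0,1}^{ℤ^d}`, encoded with `Bool`. -/
abbrev Config (d : ℕ) := Site d → Bool

/-- The translation `θ^z` acting on configurations: `(θ^z γ)(x) = γ(x - z)`. -/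
def shiftCfg {d : ℕ} (z : Site d) (γ : Config d) : Config d := fun x => γ (x - z)

/-- `φ` is a matching on `γ`: an involutive bijection matching ones to zeros. -/
def IsMatching {d : ℕ} (γ : Config d) (φ : Site d → Site d) : Prop :=
  Function.Bijective φ ∧ (∀ x, φ (φ x) = x) ∧ ∀ x, γ (φ x) = !(γ x)

/-- `Φ` is a matching rule with respect to the measure `P`. -/
def IsMatchingRule {d : ℕ} (P : Measure (Config d)) (Φ : Config d → Site d → Site d) : Prop :=
  (∀ x : Site d, Measurable fun γ => Φ γ x) ∧ ∀ᵐ γ ∂P, IsMatching γ (Φ γ)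

/-- `Φ` is translation-equivariant with respect to `P`. -/
def IsEquivariant {d : ℕ} (P : Measure (Config d)) (Φ : Config d → Site d → Site d) : Prop :=
  ∀ z x : Site d, ∀ᵐ γ ∂P, Φ (shiftCfg z γ) (x + z) = Φ γ x + z

/-- `P` is the product measure with i.i.d. Bernoulli(1/2) coordinates, characterized by
its values on cylinder events. -/
def IsBernoulliHalfProduct {d : ℕ} (P : Measure (Config d)) : Prop :=
  IsProbabilityMeasure P ∧
    ∀ (s : Finset (Site d)) (f : Site d → Bool),
      P {γ | ∀ x ∈ s, γ x = f x} = (1 / 2 : ℝ≥0∞) ^ s.card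

/-- `Z_Φ(γ) = ‖Φ(γ, 0)‖`, the `ℓ^∞` distance from the origin to its partner. -/
def ZΦ {d : ℕ} (Φ : Config d → Site d → Site d) (γ : Config d) : ℝ := ‖Φ γ 0‖

/-- Embedding of the lattice in `ℝ^d`. -/
def toR {d : ℕ} (x : Site d) : Fin d → ℝ := fun i => (x i : ℝ)

/-- The first standard basis vector `e₁`. -/
def e1 (d : ℕ) : Site d := fun i => if (i : ℕ) = 0 then 1 else 0

/-- `x` is a `k`-seed for `γ`. -/
def IsSeed {d : ℕ} (γ : Config d) (k : ℕ) (x : Site d) : Prop :=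
  γ x = true ∧ ∀ n : ℕ, 1 ≤ n → n ≤ k - 1 → γ (x + (n : ℤ) • e1 d) = false

/-- `r_k = (2^k k²)^{1/d} + 1/2`. -/
def rr (d k : ℕ) : ℝ := ((2 : ℝ) ^ k * (k : ℝ) ^ 2) ^ ((d : ℝ)⁻¹) + 1 / 2

/-- The shift `s_k = ⌊100 r_k⌋ e₁`. -/
def ss (d k : ℕ) : Site d := ⌊(100 : ℝ) * rr d k⌋ • e1 d

/-- `W_k(γ)`: the union of all `k`-cutters. -/
def cutters {d : ℕ} (γ : Config d) (k : ℕ) : Set (Fin d → ℝ) :=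
  ⋃ x ∈ {x : Site d | IsSeed γ k (x - ss d k)}, {y : Fin d → ℝ | ‖y - toR x‖ = rr d k}

/-- The `k`-blob containing the point `p ∈ ℝ^d`: the connected component of `p` in the
complement of all `j`-cutters with `j > k`. -/
def blob {d : ℕ} (γ : Config d) (k : ℕ) (p : Fin d → ℝ) : Set (Fin d → ℝ) :=
  connectedComponentIn (⋃ j ∈ {j : ℕ | k < j}, cutters γ j)ᶜ p

/-- The `k`-clump of a site `x`: the lattice points of the `k`-blob containing `x`. -/
def clump {d : ℕ} (γ : Config d) (k : ℕ) (x : Site d) : Set (Site d) :=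
  {y : Site d | toR y ∈ blob γ k (toR x)}

/-- The event `E_k`: the cube `S(-s_k, r_k - 1)` contains a `k`-seed. -/
def Ek (d k : ℕ) : Set (Config d) :=
  {γ | ∃ y : Site d, IsSeed γ k y ∧ ‖toR y + toR (ss d k)‖ ≤ rr d k - 1}

/-- A `k`-seed lying in the annulus `S(-s_k, r_k + s) \ S(-s_k, r_k - s)`. -/
def SeedInAnnulus {d : ℕ} (γ : Config d) (k : ℕ) (s : ℝ) (y : Site d) : Prop :=
  IsSeed γ k y ∧ ‖toR y + toR (ss d k)‖ ≤ rr d k + s ∧ rr d k - s < ‖toR y + toR (ss d k)‖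

/-- The event `U_k(s)`: `S(-s_k, r_k + s) \ S(-s_k, r_k - s)` contains a `k`-seed. -/
def Uk (d : ℕ) (k : ℕ) (s : ℝ) : Set (Config d) :=
  {γ | ∃ y : Site d, SeedInAnnulus γ k s y}

/-- The event `C_k(s) = ∪_{j ≥ k} U_j(s)`. -/
def Ck (d : ℕ) (k : ℕ) (s : ℝ) : Set (Config d) :=
  {γ | ∃ j : ℕ, k ≤ j ∧ γ ∈ Uk d j s}

/-- `±1`-valued spin `2γ(x) - 1`. -/
def pm1 {d : ℕ} (γ : Config d) (y : Site d) : ℤ := if γ y then 1 else -1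

/-- `Φ` matches maximally within clumps: a.s. every clump is finite and the number of
sites of each `k`-clump `L` matched outside `L` equals `|Σ_{x ∈ L} (2γ(x) - 1)|`. -/
def MatchesMaximally {d : ℕ} (P : Measure (Config d))
    (Φ : Config d → Site d → Site d) : Prop :=
  ∀ᵐ γ ∂P, ∀ k : ℕ, 1 ≤ k → ∀ x : Site d,
    (clump γ k x).Finite ∧
      (({y ∈ clump γ k x | Φ γ y ∉ clump γ k x}.ncard : ℤ)
        = |∑ᶠ y ∈ clump γ k x, pm1 γ y|)


namespace MB

theorem exists_pairing {α : Type*} [DecidableEq α] (H T : Finset α) (hHT : Disjoint H T) :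
    ∃ f : α → α, (∀ x, f (f x) = x) ∧ (∀ x ∈ H, f x = x ∨ f x ∈ T) ∧
      (∀ x ∈ T, f x = x ∨ f x ∈ H) ∧ (∀ x, x ∉ H → x ∉ T → f x = x) ∧
      ((((H ∪ T).filter fun x => f x = x).card : ℤ) ≤ |(H.card : ℤ) - T.card|) := by
  induction H using Finset.induction_on generalizing T with
  | empty =>
    refine ⟨id, ?_⟩
    simp
  | insert h H hh ih =>
    rcases T.eq_empty_or_nonempty with rfl | ⟨t, ht⟩
    · refine ⟨id, ?_⟩
      simp
    · have hd1 : h ∉ T := fun h' => (Finset.disjoint_left.1 hHT) (Finset.mem_insert_self _ _) h'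
      have htH : t ∉ H := fun h' => (Finset.disjoint_left.1 hHT) (Finset.mem_insert_of_mem h') ht
      have hne : h ≠ t := fun h' => hd1 (h' ▸ ht)
      obtain ⟨f, f1, f2, f3, f4, f5⟩ := ih (T.erase t) (by
        rw [Finset.disjoint_left]
        intro a ha hb
        exact (Finset.disjoint_left.1 hHT) (Finset.mem_insert_of_mem ha) (Finset.mem_of_mem_erase hb))
      have fh : f h = h := f4 h hh (fun h' => hd1 (Finset.mem_of_mem_erase h'))
      have ft : f t = t := f4 t htH (by simp)
      have fne : ∀ x, x ≠ h → f x ≠ h := by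
        intro x hx h'
        apply hx; rw [← f1 x, h', fh]
      have fnt : ∀ x, x ≠ t → f x ≠ t := by
        intro x hx h'
        apply hx; rw [← f1 x, h', ft]
      refine ⟨fun x => if x = h then t else if x = t then h else f x, ?_, ?_, ?_, ?_, ?_⟩
      · intro x
        by_cases h1 : x = h
        · subst h1; simp [hne.symm]
        by_cases h2 : x = t
        · subst h2; simp [h1]
        simp [h1, h2, fne x h1, fnt x h2, f1]
      · intro x hx
        by_cases h1 : x = h
        · subst h1; simp [ht]
        · have hxH : x ∈ H := by simpa [h1] using hx
          have h2 : x ≠ t := fun h' => htH (h' ▸ hxH)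
          simp only [h1, h2, if_false]
          rcases f2 x hxH with h3 | h3
          · exact Or.inl h3
          · exact Or.inr (Finset.mem_of_mem_erase h3)
      · intro x hx
        by_cases h1 : x = t
        · subst h1; simp [hne.symm]
        · have h2 : x ≠ h := fun h' => hd1 (h' ▸ hx)
          simp only [h1, h2, if_false]
          rcases f3 x (Finset.mem_erase.2 ⟨h1, hx⟩) with h3 | h3
          · exact Or.inl h3
          · exact Or.inr (Finset.mem_insert_of_mem h3)
      · intro x hx hxT
        have h1 : x ≠ h := fun h' => hx (h' ▸ Finset.mem_insert_self _ _)
        have h2 : x ≠ t := fun h' => hxT (h' ▸ ht)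
        simp only [h1, h2, if_false]
        exact f4 x (fun h' => hx (Finset.mem_insert_of_mem h')) (fun h' => hxT (Finset.mem_of_mem_erase h'))
      · have e1 : (((insert h H ∪ T).filter fun x => (if x = h then t else if x = t then h else f x) = x))
            ⊆ ((H ∪ T.erase t).filter fun x => f x = x) := by
          intro x
          simp only [Finset.mem_filter, Finset.mem_union, Finset.mem_insert, Finset.mem_erase]
          rintro ⟨hx, hx2⟩
          by_cases h1 : x = h
          · subst h1; simp at hx2; exact absurd hx2.symm hne
          by_cases h2 : x = t
          · subst h2; simp [h1] at hx2; exact absurd hx2 hne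
          simp only [h1, h2, if_false] at hx2
          refine ⟨?_, hx2⟩
          tauto
        have e2 := Finset.card_le_card e1
        have e3 : (T.erase t).card + 1 = T.card := Finset.card_erase_add_one ht
        have e4 : (insert h H).card = H.card + 1 := Finset.card_insert_of_notMem hh
        calc _ ≤ ((((H ∪ T.erase t).filter fun x => f x = x).card : ℕ) : ℤ) := by exact_mod_cast e2
          _ ≤ _ := f5
          _ = _ := by rw [e4, ← e3]; push_cast; ring_nf

/-- a chosen maximal pairing -/
def pairF {α : Type*} [DecidableEq α] (H T : Finset α) : α → α :=
  open Classical in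
  if h : Disjoint H T then (exists_pairing H T h).choose else id

variable {d : ℕ}

/-- box of radius `r` -/
def box (d r : ℕ) : Finset (Site d) := Finset.Icc (fun _ => -(r : ℤ)) (fun _ => (r : ℤ))

theorem mem_box {r : ℕ} {x : Site d} : x ∈ box d r ↔ ∀ k, |x k| ≤ (r : ℤ) := by
  simp only [box, Finset.mem_Icc, Pi.le_def, abs_le]
  exact ⟨fun h k => ⟨h.1 k, h.2 k⟩, fun h => ⟨fun k => (h k).1, fun k => (h k).2⟩⟩

theorem card_box (r : ℕ) : (box d r).card = (2 * r + 1) ^ d := by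
  simp only [box, Pi.card_Icc, Int.card_Icc, Finset.prod_const, Finset.card_univ, Fintype.card_fin]
  congr 1
  omega

/-- window of a potential seed -/
def win (m : ℕ) (s : Site d) : Finset (Site d) :=
  (Finset.range m).image fun t : ℕ => s + (t : ℤ) • e1 d

def Seed (γ : Config d) (m : ℕ) (s : Site d) : Prop := ∀ x ∈ win m s, γ x = true

def Owner (γ : Config d) (m R : ℕ) (x s : Site d) : Prop :=
  s - x ∈ box d R ∧ Seed γ m s ∧ ∀ s', s' - x ∈ box d R → Seed γ m s' → toLex s ≤ toLex s'

theorem Owner.unique {γ : Config d} {m R : ℕ} {x s s' : Site d} (h : Owner γ m R x s)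
    (h' : Owner γ m R x s') : s = s' :=
  toLex.injective (le_antisymm (h.2.2 s' h'.1 h'.2.1) (h'.2.2 s h.1 h.2.1))

theorem exists_owner {γ : Config d} {m R : ℕ} {x s : Site d} (h : s - x ∈ box d R)
    (hs : Seed γ m s) : ∃ s', Owner γ m R x s' := by
  classical
  have hne : (((box d R).image fun y => y + x).filter fun s => Seed γ m s).Nonempty :=
    ⟨s, by simp only [Finset.mem_filter, Finset.mem_image]; exact ⟨⟨s - x, h, by simp⟩, hs⟩⟩
  obtain ⟨s', hs', hmin⟩ := Finset.exists_min_image _ (fun s : Site d => toLex s) hne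
  simp only [Finset.mem_filter, Finset.mem_image] at hs' hmin
  obtain ⟨⟨y, hy, rfl⟩, h2⟩ := hs'
  exact ⟨y + x, by simpa using hy, h2, fun s'' h3 h4 => hmin s'' ⟨⟨s'' - x, h3, by simp⟩, h4⟩⟩

/-- grid index -/
def gi (q : ℕ) (y : Site d) : Site d := fun k => y k / (q : ℤ)

open Classical in
/-- relative cell -/
def cell (γ : Config d) (m R q : ℕ) (s v : Site d) : Finset (Site d) :=
  (box d R).filter fun y => Owner γ m R (s + y) s ∧ gi q y = v

theorem mem_cell {γ : Config d} {m R q : ℕ} {s v y : Site d} :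
    y ∈ cell γ m R q s v ↔ Owner γ m R (s + y) s ∧ gi q y = v := by
  classical
  simp only [cell, Finset.mem_filter, and_iff_right_iff_imp]
  rintro ⟨h, -⟩
  have h1 := h.1
  rw [mem_box] at h1 ⊢
  intro k
  have := h1 k
  simpa using this

open Classical in
/-- unmatched points of colour `b` in a cell -/
def colr (γ : Config d) (φ : Site d → Site d) (m R q : ℕ) (s v : Site d) (b : Bool) :
    Finset (Site d) :=
  (cell γ m R q s v).filter fun y => φ (s + y) = s + y ∧ γ (s + y) = b

theorem mem_colr {γ : Config d} {φ : Site d → Site d} {m R q : ℕ} {s v y : Site d} {b : Bool} :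
    y ∈ colr γ φ m R q s v b ↔
      y ∈ cell γ m R q s v ∧ φ (s + y) = s + y ∧ γ (s + y) = b := by
  classical
  simp only [colr, Finset.mem_filter]

theorem colr_disjoint (γ : Config d) (φ : Site d → Site d) (m R q : ℕ) (s v : Site d) :
    Disjoint (colr γ φ m R q s v true) (colr γ φ m R q s v false) := by
  rw [Finset.disjoint_left]
  intro y h1 h2
  rw [mem_colr] at h1 h2
  simp_all

/-- the pairing used in a cell -/
def pf (γ : Config d) (φ : Site d → Site d) (m R q : ℕ) (s v : Site d) : Site d → Site d :=
  pairF (colr γ φ m R q s v true) (colr γ φ m R q s v false)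

theorem pf_spec (γ : Config d) (φ : Site d → Site d) (m R q : ℕ) (s v : Site d) :
    (∀ x, pf γ φ m R q s v (pf γ φ m R q s v x) = x) ∧
    (∀ b, ∀ x ∈ colr γ φ m R q s v b, pf γ φ m R q s v x = x ∨
      pf γ φ m R q s v x ∈ colr γ φ m R q s v (!b)) ∧
    ((((colr γ φ m R q s v true ∪ colr γ φ m R q s v false).filter
      fun x => pf γ φ m R q s v x = x).card : ℤ) ≤
      |((colr γ φ m R q s v true).card : ℤ) - (colr γ φ m R q s v false).card|) := by
  have hd := colr_disjoint γ φ m R q s v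
  have h := (exists_pairing _ _ hd).choose_spec
  have e : pf γ φ m R q s v = (exists_pairing _ _ hd).choose := by
    simp only [pf, pairF]; rw [dif_pos hd]
  rw [e]
  refine ⟨h.1, ?_, h.2.2.2.2⟩
  rintro (_ | _)
  · exact h.2.2.1
  · exact h.2.1

open Classical in
def step (γ : Config d) (φ : Site d → Site d) (m R q : ℕ) (x : Site d) : Site d :=
  if φ x = x then
    if h : ∃ s, Owner γ m R x s then
      h.choose + pf γ φ m R q h.choose (gi q (x - h.choose)) (x - h.choose)
    else x
  else φ x

theorem step_of_ne {γ : Config d} {φ : Site d → Site d} {m R q : ℕ} {x : Site d}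
    (h : φ x ≠ x) : step γ φ m R q x = φ x := by
  simp [step, h]

theorem step_of_owner {γ : Config d} {φ : Site d → Site d} {m R q : ℕ} {x s : Site d}
    (h : φ x = x) (ho : Owner γ m R x s) :
    step γ φ m R q x = s + pf γ φ m R q s (gi q (x - s)) (x - s) := by
  have hex : ∃ s, Owner γ m R x s := ⟨s, ho⟩
  have e : hex.choose = s := hex.choose_spec.unique ho
  simp only [step, h, if_true]
  rw [dif_pos hex, e]

theorem step_of_not {γ : Config d} {φ : Site d → Site d} {m R q : ℕ} {x : Site d}
    (h : φ x = x) (ho : ¬ ∃ s, Owner γ m R x s) : step γ φ m R q x = x := by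
  simp only [step, h, if_true]
  rw [dif_neg ho]

def SameCell (γ : Config d) (m R q : ℕ) (x y : Site d) : Prop :=
  ∃ s, Owner γ m R x s ∧ Owner γ m R y s ∧ gi q (x - s) = gi q (y - s)

/-- what a step does to an unmatched site -/
theorem step_cases {γ : Config d} {φ : Site d → Site d} {m R q : ℕ} {x : Site d}
    (h : φ x = x) (hne : step γ φ m R q x ≠ x) :
    SameCell γ m R q x (step γ φ m R q x) ∧ φ (step γ φ m R q x) = step γ φ m R q x ∧
    γ (step γ φ m R q x) = !(γ x) ∧ step γ φ m R q (step γ φ m R q x) = x := by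
  by_cases ho : ∃ s, Owner γ m R x s
  · obtain ⟨s, hs⟩ := ho
    obtain ⟨p1, p2, -⟩ := pf_spec γ φ m R q s (gi q (x - s))
    have hx : step γ φ m R q x = s + pf γ φ m R q s (gi q (x - s)) (x - s) := step_of_owner h hs
    have hmem : x - s ∈ colr γ φ m R q s (gi q (x - s)) (γ x) := by
      rw [mem_colr, mem_cell]; simp [h, hs]
    rcases p2 _ _ hmem with h1 | h1
    · exact absurd (by rw [hx, h1]; simp) hne
    · have hx2 : pf γ φ m R q s (gi q (x - s)) (x - s) = step γ φ m R q x - s := by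
        rw [hx, add_sub_cancel_left]
      rw [hx2] at h1
      set x' := step γ φ m R q x with hx'
      have h2 := mem_colr.1 h1
      have h3 := mem_cell.1 h2.1
      simp only [add_sub_cancel] at h2 h3
      have hy : φ x' = x' := h2.2.1
      refine ⟨⟨s, hs, h3.1, h3.2.symm⟩, hy, h2.2.2, ?_⟩
      rw [step_of_owner hy h3.1, h3.2, hx, add_sub_cancel_left, p1]
      simp
  · exact absurd (step_of_not h ho) hne

structure Good (γ : Config d) (φ : Site d → Site d) : Prop where
  inv : ∀ x, φ (φ x) = x
  col : ∀ x, φ x ≠ x → γ (φ x) = !(γ x)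

theorem Good.step {γ : Config d} {φ : Site d → Site d} (h : Good γ φ) (m R q : ℕ) :
    Good γ (step γ φ m R q) := by
  constructor
  · intro x
    by_cases h1 : φ x = x
    · by_cases h2 : MB.step γ φ m R q x = x
      · rw [h2, h2]
      · exact (step_cases h1 h2).2.2.2
    · rw [step_of_ne h1]
      rw [step_of_ne (by rw [h.inv]; exact Ne.symm h1), h.inv]
  · intro x hx
    by_cases h1 : φ x = x
    · exact (step_cases h1 hx).2.2.1
    · rw [step_of_ne h1]; exact h.col x h1

open Classical in
theorem card_unmatched_le {γ : Config d} {φ : Site d → Site d} (hφ : Good γ φ) (m R q : ℕ)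
    (s v : Site d) :
    ((((cell γ m R q s v).filter fun y => step γ φ m R q (s + y) = s + y).card : ℤ)) ≤
      |∑ y ∈ cell γ m R q s v, pm1 γ (s + y)| +
      (((cell γ m R q s v).filter fun y => φ (s + y) ≠ s + y ∧
        ¬ SameCell γ m R q (s + y) (φ (s + y))).card : ℤ) := by
  set C := cell γ m R q s v with hC
  obtain ⟨p1, p2, p3⟩ := pf_spec γ φ m R q s v
  -- step A
  have hA : (C.filter fun y => step γ φ m R q (s + y) = s + y) ⊆
      ((colr γ φ m R q s v true ∪ colr γ φ m R q s v false).filter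
      fun x => pf γ φ m R q s v x = x) := by
    intro y hy
    rw [Finset.mem_filter] at hy
    obtain ⟨hy1, hy2⟩ := hy
    have hy3 := mem_cell.1 hy1
    have hu : φ (s + y) = s + y := by
      by_contra h
      rw [step_of_ne h] at hy2
      exact h hy2
    rw [step_of_owner hu hy3.1] at hy2
    simp only [add_sub_cancel_left, hy3.2] at hy2
    replace hy2 := add_left_cancel hy2
    rw [Finset.mem_filter]
    refine ⟨?_, hy2⟩
    rw [Finset.mem_union, mem_colr, mem_colr]
    rcases hb : γ (s + y) <;> simp [hu, ← hC, hy1]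
  have hA' : (((C.filter fun y => step γ φ m R q (s + y) = s + y).card : ℤ)) ≤
      |((colr γ φ m R q s v true).card : ℤ) - (colr γ φ m R q s v false).card| :=
    le_trans (by exact_mod_cast Finset.card_le_card hA) p3
  -- step B
  have hB : ((colr γ φ m R q s v true).card : ℤ) - (colr γ φ m R q s v false).card =
      ∑ y ∈ C.filter (fun y => φ (s + y) = s + y), pm1 γ (s + y) := by
    have e1 : (C.filter (fun y => φ (s + y) = s + y)) =
        colr γ φ m R q s v true ∪ colr γ φ m R q s v false := by
      ext y
      rw [Finset.mem_union, mem_colr, mem_colr, Finset.mem_filter, ← hC]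
      rcases hb : γ (s + y) <;> simp
    rw [e1, Finset.sum_union (colr_disjoint γ φ m R q s v)]
    have e2 : ∑ y ∈ colr γ φ m R q s v true, pm1 γ (s + y) =
        ∑ y ∈ colr γ φ m R q s v true, (1 : ℤ) :=
      Finset.sum_congr rfl fun y hy => by simp [pm1, (mem_colr.1 hy).2.2]
    have e3 : ∑ y ∈ colr γ φ m R q s v false, pm1 γ (s + y) =
        ∑ y ∈ colr γ φ m R q s v false, (-1 : ℤ) :=
      Finset.sum_congr rfl fun y hy => by simp [pm1, (mem_colr.1 hy).2.2]
    rw [e2, e3]; simp; ring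
  -- step C
  have hsplit : ∑ y ∈ C, pm1 γ (s + y) = ∑ y ∈ C.filter (fun y => φ (s + y) = s + y), pm1 γ (s + y)
      + ∑ y ∈ C.filter (fun y => ¬ φ (s + y) = s + y), pm1 γ (s + y) :=
    (Finset.sum_filter_add_sum_filter_not _ _ _).symm
  have hsplit2 : ∑ y ∈ C.filter (fun y => ¬ φ (s + y) = s + y), pm1 γ (s + y) =
      ∑ y ∈ (C.filter (fun y => ¬ φ (s + y) = s + y)).filter
        (fun y => SameCell γ m R q (s + y) (φ (s + y))), pm1 γ (s + y)
      + ∑ y ∈ (C.filter (fun y => ¬ φ (s + y) = s + y)).filter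
        (fun y => ¬ SameCell γ m R q (s + y) (φ (s + y))), pm1 γ (s + y) :=
    (Finset.sum_filter_add_sum_filter_not _ _ _).symm
  have hzero : ∑ y ∈ (C.filter (fun y => ¬ φ (s + y) = s + y)).filter
        (fun y => SameCell γ m R q (s + y) (φ (s + y))), pm1 γ (s + y) = 0 := by
    refine Finset.sum_involution (fun y _ => φ (s + y) - s) ?_ ?_ ?_ ?_
    · intro y hy
      simp only [Finset.mem_filter] at hy
      have := hφ.col _ hy.1.2
      simp only [add_sub_cancel, pm1, this]
      cases γ (s + y) <;> simp
    · intro y hy _ h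
      simp only [Finset.mem_filter] at hy
      apply hy.1.2
      exact (sub_eq_iff_eq_add'.1 h)
    · intro y hy
      simp only [Finset.mem_filter] at hy ⊢
      obtain ⟨⟨h1, h2⟩, s', h3, h4, h5⟩ := hy
      have h6 := mem_cell.1 h1
      have hs : s' = s := h3.unique h6.1
      subst hs
      simp only [add_sub_cancel_left] at h5
      simp only [add_sub_cancel, hφ.inv]
      refine ⟨⟨?_, Ne.symm h2⟩, s', h4, h6.1, by simp [h5]⟩
      rw [hC, mem_cell]
      simp only [add_sub_cancel]
      exact ⟨h4, by rw [← h5, h6.2]⟩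
    · intro y hy
      simp [hφ.inv]
  have hbd : |∑ y ∈ (C.filter (fun y => ¬ φ (s + y) = s + y)).filter
        (fun y => ¬ SameCell γ m R q (s + y) (φ (s + y))), pm1 γ (s + y)| ≤
      ((C.filter fun y => φ (s + y) ≠ s + y ∧
        ¬ SameCell γ m R q (s + y) (φ (s + y))).card : ℤ) := by
    rw [Finset.filter_filter]
    refine (Finset.abs_sum_le_sum_abs _ _).trans ?_
    refine (Finset.sum_le_card_nsmul _ _ 1 ?_).trans (by simp)
    intro y _
    simp only [pm1]; split_ifs <;> simp
  rw [hzero, zero_add] at hsplit2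
  rw [hB] at hA'
  have : ∑ y ∈ C.filter (fun y => φ (s + y) = s + y), pm1 γ (s + y) =
      ∑ y ∈ C, pm1 γ (s + y) - ∑ y ∈ (C.filter (fun y => ¬ φ (s + y) = s + y)).filter
        (fun y => ¬ SameCell γ m R q (s + y) (φ (s + y))), pm1 γ (s + y) := by
    rw [hsplit, hsplit2]; ring
  rw [this] at hA'
  refine hA'.trans ((abs_sub _ _).trans ?_)
  gcongr

end MB

namespace MB
variable {d : ℕ}

/-- exponents of the level radii -/
def aa (n : ℕ) : ℕ := 100 * 2 ^ n
/-- level radii -/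
def RR (n : ℕ) : ℕ := 2 ^ aa n
/-- window lengths -/
def mm (d n : ℕ) : ℕ := (d * 100 - 1) * 2 ^ n

theorem exists_lev (j : ℕ) : ∃ n, j ≤ aa n :=
  ⟨j, by unfold aa; have := Nat.lt_two_pow_self (n := j); omega⟩

def lev (j : ℕ) : ℕ := Nat.find (exists_lev j)

theorem le_aa_lev (j : ℕ) : j ≤ aa (lev j) := Nat.find_spec (exists_lev j)

theorem aa_lt_of_lt_lev {j n : ℕ} (h : n < lev j) : aa n < j := by
  have := Nat.find_min (exists_lev j) h
  omega

theorem lev_le {j n : ℕ} (h : j ≤ aa n) : lev j ≤ n := Nat.find_min' (exists_lev j) h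

theorem aa_mono {n n' : ℕ} (h : n ≤ n') : aa n ≤ aa n' := by
  unfold aa; gcongr; norm_num

theorem lev_mono {i j : ℕ} (h : i ≤ j) : lev i ≤ lev j := lev_le (h.trans (le_aa_lev j))

/-- the successive partial matchings -/
def phi : ℕ → Config d → Site d → Site d
  | 0, _ => fun x => x
  | j + 1, γ => step γ (phi j γ) (mm d (lev (j + 1))) (RR (lev (j + 1))) (2 ^ (j + 1))

theorem phi_good (j : ℕ) (γ : Config d) : Good γ (phi j γ) := by
  induction j with
  | zero => exact ⟨fun x => rfl, fun x h => absurd rfl h⟩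
  | succ j ih => exact ih.step _ _ _

/-- cell equivalence at stage j -/
def SC (γ : Config d) (j : ℕ) (x y : Site d) : Prop :=
  SameCell γ (mm d (lev j)) (RR (lev j)) (2 ^ j) x y

theorem phi_stable {i j : ℕ} (hij : i ≤ j) {γ : Config d} {x : Site d} (h : phi i γ x ≠ x) :
    phi j γ x = phi i γ x := by
  induction j, hij using Nat.le_induction with
  | base => rfl
  | succ j hj ih =>
    rw [← ih] at h ⊢
    exact step_of_ne h

theorem phi_first {j : ℕ} {γ : Config d} {x : Site d} (h : phi j γ x ≠ x) :
    ∃ i < j, phi i γ x = x ∧ SC γ (i + 1) x (phi j γ x) := by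
  induction j with
  | zero => exact absurd rfl h
  | succ j ih =>
    by_cases h1 : phi j γ x = x
    · exact ⟨j, Nat.lt_succ_self j, h1, (step_cases h1 h).1⟩
    · obtain ⟨i, hi, h2, h3⟩ := ih h1
      refine ⟨i, by omega, h2, ?_⟩
      rw [phi_stable (Nat.le_succ j) h1]; exact h3

theorem abs_lt_of_ediv_eq {a b q : ℤ} (hq : 0 < q) (h : a / q = b / q) : |a - b| < q := by
  have h1 := Int.emod_add_mul_ediv a q
  have h2 := Int.emod_add_mul_ediv b q
  have h3 := Int.emod_nonneg a hq.ne'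
  have h4 := Int.emod_nonneg b hq.ne'
  have h5 := Int.emod_lt_of_pos a hq
  have h6 := Int.emod_lt_of_pos b hq
  rw [h] at h1
  rw [abs_lt]; constructor <;> linarith

theorem SameCell.dist {γ : Config d} {m R q : ℕ} (hq : 0 < q) {x y : Site d}
    (h : SameCell γ m R q x y) (k : Fin d) : |y k - x k| < q := by
  obtain ⟨s, -, -, h⟩ := h
  have := abs_lt_of_ediv_eq (by exact_mod_cast hq) (congrFun h k)
  simp only [Pi.sub_apply] at this
  rw [abs_sub_comm]
  convert this using 2; ring

theorem SC.nested {γ : Config d} {i j : ℕ} (hij : i ≤ j) (hl : lev i = lev j) {x y : Site d}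
    (h : SC γ i x y) : SC γ j x y := by
  obtain ⟨s, h1, h2, h3⟩ := h
  rw [hl] at h1 h2
  refine ⟨s, h1, h2, ?_⟩
  obtain ⟨c, rfl⟩ := Nat.exists_eq_add_of_le hij
  ext k
  have := congrFun h3 k
  simp only [gi] at this ⊢
  push_cast at this ⊢
  rw [pow_add, ← Int.ediv_ediv_of_nonneg (by positivity), ← Int.ediv_ediv_of_nonneg (by positivity), this]

/-- positions of seeds that may separate the origin from a point at distance `< 2^i`. -/
def nearGrid (d R i j : ℕ) : Finset (Site d) :=
  open Classical in
  (box d (R + 2 ^ i)).filter fun s => ∃ k, ∃ c : ℤ, |s k - c * 2 ^ j| ≤ 2 ^ i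

theorem mem_nearGrid {R i j : ℕ} {s : Site d} : s ∈ nearGrid d R i j ↔
    (∀ k, |s k| ≤ R + 2 ^ i) ∧ ∃ k, ∃ c : ℤ, |s k - c * 2 ^ j| ≤ 2 ^ i := by
  classical
  simp only [nearGrid, Finset.mem_filter, mem_box]
  push_cast
  rfl

theorem sep_lemma {γ : Config d} {m R i j : ℕ} {cR : ℤ} (hR : (R : ℤ) = cR * 2 ^ j)
    {s0 y : Site d} (ho : Owner γ m R 0 s0)
    (hy : ∀ k, |y k| < 2 ^ i) (hn : ¬ SameCell γ m R (2 ^ j) 0 y) :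
    ∃ s ∈ nearGrid d R i j, Seed γ m s := by
  by_contra hcon
  push Not at hcon
  have hs0 : ∀ k, |s0 k| ≤ R := by
    have := mem_box.1 ho.1
    simpa using this
  have key : ∀ s : Site d, Seed γ m s → (∀ k, |s k| ≤ R + 2 ^ i) → ∀ k, ∀ c : ℤ,
      2 ^ i < |s k - c * 2 ^ j| := by
    intro s hs h1 k c
    by_contra h2
    exact hcon s (mem_nearGrid.2 ⟨h1, k, c, not_lt.1 h2⟩) hs
  have hpos : (0 : ℤ) < 2 ^ i := by positivity
  have k0 := key s0 ho.2.1 (fun k => (hs0 k).trans (by linarith))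
  apply hn
  refine ⟨s0, ho, ⟨?_, ho.2.1, ?_⟩, ?_⟩
  · rw [mem_box]
    intro k
    by_contra h
    have h1 := k0 k cR
    have h2 := k0 k (-cR)
    rw [neg_mul] at h2
    rw [← hR] at h1 h2
    have h3 := hs0 k
    have h4 := hy k
    simp only [Pi.sub_apply] at h
    rw [abs_le] at h3 h
    rw [abs_lt] at h4
    rw [lt_abs] at h1 h2
    apply h
    constructor
    · by_contra h5
      rcases h2 with h2 | h2 <;> linarith
    · by_contra h5
      rcases h1 with h1 | h1 <;> linarith
  · intro s' h1 h2
    refine ho.2.2 s' ?_ h2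
    rw [mem_box] at h1 ⊢
    have h5 : ∀ k, |s' k| ≤ R + 2 ^ i := by
      intro k
      have h1k := h1 k
      have h4 := hy k
      simp only [Pi.sub_apply] at h1k
      rw [abs_le] at h1k ⊢; rw [abs_lt] at h4
      constructor <;> linarith
    intro k
    have e1 := key s' h2 h5 k cR
    have e2 := key s' h2 h5 k (-cR)
    rw [neg_mul] at e2
    rw [← hR] at e1 e2
    have h5k := h5 k
    simp only [Pi.sub_apply, Pi.zero_apply, sub_zero]
    rw [abs_le] at h5k ⊢
    rw [lt_abs] at e1 e2
    constructor
    · by_contra h6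
      rcases e2 with e2 | e2 <;> linarith
    · by_contra h6
      rcases e1 with e1 | e1 <;> linarith
  · ext k
    simp only [gi, Pi.sub_apply, Pi.zero_apply, zero_sub]
    push_cast
    have hq : (0 : ℤ) < 2 ^ j := by positivity
    have h4 := hy k
    rw [abs_lt] at h4
    by_contra hne
    have f1 := Int.emod_add_mul_ediv (-s0 k) (2 ^ j)
    have f2 := Int.emod_add_mul_ediv (y k - s0 k) (2 ^ j)
    have f3 := Int.emod_nonneg (-s0 k) hq.ne'
    have f4 := Int.emod_nonneg (y k - s0 k) hq.ne'
    have f5 := Int.emod_lt_of_pos (-s0 k) hq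
    have f6 := Int.emod_lt_of_pos (y k - s0 k) hq
    set A := (-s0 k) / 2 ^ j
    set B := (y k - s0 k) / 2 ^ j
    rcases lt_or_gt_of_ne hne with h | h
    · -- multiple B*2^j between
      have h1 := k0 k (-B)
      have h7 : (2:ℤ) ^ j * (A + 1) ≤ 2 ^ j * B := mul_le_mul_of_nonneg_left (by omega) hq.le
      rw [lt_abs] at h1
      rcases h1 with h1 | h1 <;> linarith
    · have h1 := k0 k (-A)
      have h7 : (2:ℤ) ^ j * (B + 1) ≤ 2 ^ j * A := mul_le_mul_of_nonneg_left (by omega) hq.le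
      rw [lt_abs] at h1
      rcases h1 with h1 | h1 <;> linarith

/-- If the partner of the origin before stage `j` lies in another stage-`j` cell, then there is
a seed near the grid. -/
theorem cross_lemma {γ : Config d} {j : ℕ} {s0 : Site d}
    (ho : Owner γ (mm d (lev (j+1))) (RR (lev (j+1))) 0 s0)
    (h1 : phi j γ 0 ≠ 0) (h2 : ¬ SC γ (j + 1) 0 (phi j γ 0)) :
    ∃ i, i + 1 ≤ j ∧ lev (i + 1) < lev (j + 1) ∧ phi i γ 0 = 0 ∧
      ∃ s ∈ nearGrid d (RR (lev (j+1))) (i + 1) (j + 1), Seed γ (mm d (lev (j+1))) s := by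
  obtain ⟨i, hi, h3, h4⟩ := phi_first h1
  refine ⟨i, hi, ?_, h3, ?_⟩
  · rcases (lev_mono (show i + 1 ≤ j + 1 by omega)).lt_or_eq with h | h
    · exact h
    · exact absurd (h4.nested (by omega) h) h2
  · refine sep_lemma (cR := 2 ^ (aa (lev (j+1)) - (j + 1))) ?_ ho ?_ h2
    · rw [← pow_add, Nat.sub_add_cancel (le_aa_lev _)]; simp [RR]
    · intro k
      have := SameCell.dist (by positivity) h4 k
      simpa using this

/-! ### Equivariance -/

theorem mem_win {m : ℕ} {s x : Site d} : x ∈ win m s ↔ ∃ t : ℕ, t < m ∧ s + (t : ℤ) • e1 d = x := by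
  simp [win]

theorem seed_shift {γ : Config d} {m : ℕ} {s z : Site d} :
    Seed (shiftCfg z γ) m (s + z) ↔ Seed γ m s := by
  unfold Seed
  constructor
  · intro h x hx
    obtain ⟨t, ht, rfl⟩ := mem_win.1 hx
    have := h (s + z + (t : ℤ) • e1 d) (mem_win.2 ⟨t, ht, rfl⟩)
    rw [shiftCfg] at this
    rw [← this]; congr 1; abel
  · intro h x hx
    obtain ⟨t, ht, rfl⟩ := mem_win.1 hx
    have := h (s + (t : ℤ) • e1 d) (mem_win.2 ⟨t, ht, rfl⟩)
    rw [shiftCfg]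
    rw [← this]; congr 1; abel

theorem owner_shift {γ : Config d} {m R : ℕ} {x s z : Site d} :
    Owner (shiftCfg z γ) m R (x + z) (s + z) ↔ Owner γ m R x s := by
  unfold Owner
  rw [seed_shift, add_sub_add_right_eq_sub]
  refine and_congr_right fun _ => and_congr_right fun _ => ?_
  constructor
  · intro h s' h1 h2
    have := h (s' + z) (by rwa [add_sub_add_right_eq_sub]) (seed_shift.2 h2)
    rw [toLex_add, toLex_add] at this
    exact le_of_add_le_add_right this
  · intro h s' h1 h2
    have h3 := h (s' - z) (by convert h1 using 1; abel) (by
      rw [← seed_shift (z := z)]; simpa using h2)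
    have := add_le_add_left h3 (toLex z)
    rw [← toLex_add, ← toLex_add] at this
    simpa [add_comm] using this

theorem cell_shift {γ : Config d} {m R q : ℕ} {s v z : Site d} :
    cell (shiftCfg z γ) m R q (s + z) v = cell γ m R q s v := by
  ext y
  rw [mem_cell, mem_cell, show s + z + y = s + y + z by abel, owner_shift]

theorem step_shift {γ : Config d} {φ φ' : Site d → Site d} {m R q : ℕ} {z : Site d}
    (h : ∀ x, φ' (x + z) = φ x + z) (x : Site d) :
    step (shiftCfg z γ) φ' m R q (x + z) = step γ φ m R q x + z := by
  by_cases h1 : φ x = x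
  · have h1' : φ' (x + z) = x + z := by rw [h, h1]
    by_cases h2 : ∃ s, Owner γ m R x s
    · obtain ⟨s, hs⟩ := h2
      rw [step_of_owner h1 hs, step_of_owner h1' (owner_shift.2 hs), add_sub_add_right_eq_sub]
      have : ∀ v, pf (shiftCfg z γ) φ' m R q (s + z) v = pf γ φ m R q s v := by
        intro v
        have hc : ∀ b, colr (shiftCfg z γ) φ' m R q (s + z) v b = colr γ φ m R q s v b := by
          intro b
          ext y
          rw [mem_colr, mem_colr, cell_shift, show s + z + y = s + y + z by abel, h]
          simp [shiftCfg]
        simp only [pf, hc]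
      rw [this]; abel
    · rw [step_of_not h1 h2, step_of_not h1']
      rintro ⟨s, hs⟩
      exact h2 ⟨s - z, by rw [← owner_shift (z := z)]; simpa using hs⟩
  · have h1' : φ' (x + z) ≠ x + z := by rw [h]; simpa using h1
    rw [step_of_ne h1, step_of_ne h1', h]

theorem phi_shift (j : ℕ) (γ : Config d) (z x : Site d) :
    phi j (shiftCfg z γ) (x + z) = phi j γ x + z := by
  induction j generalizing x with
  | zero => rfl
  | succ j ih => exact step_shift ih x

theorem SC_shift {j : ℕ} {γ : Config d} {z x y : Site d} :
    SC (shiftCfg z γ) j (x + z) (y + z) ↔ SC γ j x y := by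
  constructor
  · rintro ⟨s, h1, h2, h3⟩
    obtain ⟨s, rfl⟩ : ∃ s', s = s' + z := ⟨s - z, by simp⟩
    rw [owner_shift] at h1 h2
    simp only [add_sub_add_right_eq_sub] at h3
    exact ⟨s, h1, h2, h3⟩
  · rintro ⟨s, h1, h2, h3⟩
    refine ⟨s + z, owner_shift.2 h1, owner_shift.2 h2, ?_⟩
    simpa only [add_sub_add_right_eq_sub] using h3

/-! ### Locality -/

def Agree (γ γ' : Config d) (x : Site d) (r : ℕ) : Prop := ∀ y, y - x ∈ box d r → γ y = γ' y

theorem box_add {a b r : ℕ} (h : a + b ≤ r) {x y : Site d} (hx : x ∈ box d a) (hy : y ∈ box d b) :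
    x + y ∈ box d r := by
  rw [mem_box] at *
  intro k
  have h1 := hx k
  have h2 := hy k
  have h3 : ((a : ℤ) + b) ≤ r := by exact_mod_cast h
  exact (abs_add_le _ _).trans (by linarith)

theorem Agree.sub {γ γ' : Config d} {x y : Site d} {r a b : ℕ} (h : Agree γ γ' x r)
    (hy : y - x ∈ box d a) (hab : a + b ≤ r) : Agree γ γ' y b := by
  intro w hw
  apply h
  have := box_add hab hy hw
  convert this using 1; abel

theorem Agree.symm {γ γ' : Config d} {x : Site d} {r : ℕ} (h : Agree γ γ' x r) :
    Agree γ' γ x r := fun y hy => (h y hy).symm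

theorem zero_mem_box (r : ℕ) : (0 : Site d) ∈ box d r := by
  rw [mem_box]; intro k; simp

theorem Agree.mono {γ γ' : Config d} {x : Site d} {r r' : ℕ} (h : Agree γ γ' x r) (hr : r' ≤ r) :
    Agree γ γ' x r' :=
  h.sub (a := 0) (by simpa using zero_mem_box 0) (by omega)

theorem smul_e1_mem_box {t m : ℕ} (h : t ≤ m) : ((t : ℤ) • e1 d) ∈ box d m := by
  rw [mem_box]
  intro k
  simp only [Pi.smul_apply, e1, smul_eq_mul]
  split_ifs
  · simpa using h
  · simp

theorem win_sub_box {m : ℕ} {s x : Site d} (hx : x ∈ win m s) : x - s ∈ box d m := by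
  obtain ⟨t, ht, rfl⟩ := mem_win.1 hx
  rw [add_sub_cancel_left]
  exact smul_e1_mem_box ht.le

theorem seed_local {γ γ' : Config d} {m : ℕ} {s : Site d} (h : Agree γ γ' s m) :
    Seed γ m s ↔ Seed γ' m s := by
  unfold Seed
  refine forall₂_congr fun x hx => ?_
  rw [h x (win_sub_box hx)]

theorem owner_local {γ γ' : Config d} {m R : ℕ} {x s : Site d} (h : Agree γ γ' x (R + m)) :
    Owner γ m R x s ↔ Owner γ' m R x s := by
  unfold Owner
  refine and_congr_right fun h1 => and_congr (seed_local (h.sub h1 le_rfl)) ?_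
  refine forall₂_congr fun s' h2 => ?_
  rw [seed_local (h.sub h2 le_rfl)]

theorem neg_mem_box {r : ℕ} {x : Site d} : -x ∈ box d r ↔ x ∈ box d r := by
  simp [mem_box]

theorem cell_local {γ γ' : Config d} {m R q : ℕ} {s v : Site d} (h : Agree γ γ' s (2 * R + m)) :
    cell γ m R q s v = cell γ' m R q s v := by
  ext y
  rw [mem_cell, mem_cell]
  constructor
  · rintro ⟨h1, h2⟩
    have h3 := h1.1
    rw [sub_add_cancel_left, neg_mem_box] at h3
    exact ⟨(owner_local (h.sub (y := s + y) (by simpa using h3) (by omega))).1 h1, h2⟩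
  · rintro ⟨h1, h2⟩
    have h3 := h1.1
    rw [sub_add_cancel_left, neg_mem_box] at h3
    exact ⟨(owner_local (h.sub (y := s + y) (by simpa using h3) (by omega))).2 h1, h2⟩

theorem cell_sub_box {γ : Config d} {m R q : ℕ} {s v y : Site d} (h : y ∈ cell γ m R q s v) :
    y ∈ box d R := by
  have h3 := (mem_cell.1 h).1.1
  rwa [sub_add_cancel_left, neg_mem_box] at h3

theorem step_local {γ γ' : Config d} {φ φ' : Site d → Site d} {m R q : ℕ} {x : Site d}
    (h : Agree γ γ' x (3 * R + m)) (hφ : ∀ y, y - x ∈ box d (2 * R) → φ y = φ' y) :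
    step γ φ m R q x = step γ' φ' m R q x := by
  have hx : φ x = φ' x := hφ x (by simpa using zero_mem_box _)
  by_cases h1 : φ x = x
  · have h1' : φ' x = x := by rw [← hx, h1]
    by_cases h2 : ∃ s, Owner γ m R x s
    · obtain ⟨s, hs⟩ := h2
      have hs' := (owner_local (h.mono (by omega))).1 hs
      rw [step_of_owner h1 hs, step_of_owner h1' hs']
      have : ∀ v, pf γ φ m R q s v = pf γ' φ' m R q s v := by
        intro v
        have hcell : cell γ m R q s v = cell γ' m R q s v :=
          cell_local (h.sub hs.1 (by omega))
        have hc : ∀ b, colr γ φ m R q s v b = colr γ' φ' m R q s v b := by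
          intro b
          ext y
          rw [mem_colr, mem_colr, hcell]
          refine and_congr_right fun hy => ?_
          have hy1 := cell_sub_box hy
          have hb : s + y - x ∈ box d (2 * R) := by
            have := box_add (r := 2 * R) (by omega) hs.1 hy1
            convert this using 1; abel
          rw [hφ _ hb, h (s + y) (by
            have := box_add (r := 3 * R + m) (b := 0) (by omega) hb (zero_mem_box 0)
            simpa using this)]
        simp only [pf, hc]
      rw [this]
    · rw [step_of_not h1 h2, step_of_not h1']
      rintro ⟨s, hs⟩
      exact h2 ⟨s, (owner_local (h.mono (by omega))).2 hs⟩
  · have h1' : φ' x ≠ x := by rw [← hx]; exact h1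
    rw [step_of_ne h1, step_of_ne h1', hx]

def rho (d : ℕ) : ℕ → ℕ
  | 0 => 0
  | j + 1 => rho d j + (3 * RR (lev (j + 1)) + mm d (lev (j + 1)))

theorem phi_local (j : ℕ) {γ γ' : Config d} {x : Site d} (h : Agree γ γ' x (rho d j)) :
    phi j γ x = phi j γ' x := by
  induction j generalizing x with
  | zero => rfl
  | succ j ih =>
    refine step_local (h.mono ?_) fun y hy => ih (h.sub hy ?_)
    · simp only [rho]; omega
    · simp only [rho]; omega

theorem rho_le {j n : ℕ} (h : j ≤ aa n) : rho d j ≤ j * (3 * RR n + mm d n) := by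
  induction j with
  | zero => simp [rho]
  | succ j ih =>
    have h1 := ih (by omega)
    have h2 : lev (j + 1) ≤ n := lev_le h
    have h3 : RR (lev (j + 1)) ≤ RR n := Nat.pow_le_pow_right (by norm_num) (aa_mono h2)
    have h4 : mm d (lev (j + 1)) ≤ mm d n := Nat.mul_le_mul_left _ (Nat.pow_le_pow_right (by norm_num) h2)
    simp only [rho]
    nlinarith

end MB

namespace MB
variable {d : ℕ}

/-- fair coin -/
def coin : Measure Bool := (1 / 2 : ℝ≥0∞) • Measure.dirac true + (1 / 2 : ℝ≥0∞) • Measure.dirac false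

instance : IsProbabilityMeasure coin := ⟨by
  simp [coin]
  exact ENNReal.inv_two_add_inv_two⟩

theorem coin_singleton (b : Bool) : coin {b} = 1 / 2 := by
  cases b <;> simp [coin]

theorem bern_eq {P : Measure (Config d)} (hP : IsBernoulliHalfProduct P) :
    P = Measure.infinitePi (fun _ => coin) := by
  classical
  have := hP.1
  refine Measure.eq_infinitePi _ fun s t _ => ?_
  by_cases he : ∃ i ∈ s, t i = ∅
  · obtain ⟨i, hi, hti⟩ := he
    rw [Finset.prod_eq_zero hi (by simp [hti])]
    rw [Set.pi_eq_empty (i := i) hi hti]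
    simp
  · push Not at he
    choose! f hf using he
    have h1 : Set.pi (s : Set (Site d)) t = {γ | ∀ x ∈ s.filter (fun i => t i ≠ Set.univ), γ x = f x} := by
      ext γ
      simp only [Set.mem_pi, Finset.mem_coe, Set.mem_ofPred_eq, Finset.mem_filter]
      constructor
      · rintro h x ⟨hx, hx2⟩
        by_contra hne
        apply hx2
        rw [Set.eq_univ_iff_forall]
        intro b
        have h3 := h x hx
        have h4 := hf x hx
        rcases hb : b with _ | _ <;> rcases h5 : γ x with _ | _ <;> rcases h6 : f x with _ | _ <;> simp_all
      · intro h x hx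
        by_cases hu : t x = Set.univ
        · simp [hu]
        · rw [h x ⟨hx, hu⟩]; exact hf x hx
    rw [h1, hP.2]
    have h2 : ∀ i ∈ s, coin (t i) = if t i ≠ Set.univ then 1 / 2 else 1 := by
      intro i hi
      split_ifs with h
      · rw [← coin_singleton (f i)]
        congr 1
        ext b
        simp only [Set.mem_singleton_iff]
        constructor
        · intro hb
          by_contra hne
          apply h
          rw [Set.eq_univ_iff_forall]
          intro b'
          have h4 := hf i hi
          rcases hb2 : b' with _ | _ <;> rcases h5 : b with _ | _ <;> rcases h6 : f i with _ | _ <;> simp_all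
        · rintro rfl; exact hf i hi
      · push Not at h
        rw [h]; exact measure_univ
    rw [Finset.prod_congr rfl h2, Finset.prod_ite]
    simp

/-- flip one coordinate -/
def flip (x : Site d) (γ : Config d) : Config d := fun y => if y = x then !(γ y) else γ y

theorem flip_flip (x : Site d) (γ : Config d) : flip x (flip x γ) = γ := by
  ext y; unfold flip; split_ifs <;> simp

theorem flip_same (x : Site d) (γ : Config d) : flip x γ x = !(γ x) := by simp [flip]

theorem flip_of_ne {x y : Site d} (h : y ≠ x) (γ : Config d) : flip x γ y = γ y := by simp [flip, h]

theorem measurable_shift (z : Site d) : Measurable (shiftCfg z) := by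
  unfold shiftCfg
  fun_prop

theorem measurable_flip (x : Site d) : Measurable (flip x) := by
  unfold flip
  refine measurable_pi_lambda _ fun y => ?_
  split_ifs
  · exact (measurable_of_finite (fun b : Bool => !b)).comp (measurable_pi_apply (X := fun _ => Bool) y)
  · exact measurable_pi_apply y

theorem meas_cyl (s : Finset (Site d)) (f : Site d → Bool) :
    MeasurableSet {γ : Config d | ∀ x ∈ s, γ x = f x} := by
  have : {γ : Config d | ∀ x ∈ s, γ x = f x} = ⋂ x ∈ s, (fun γ : Config d => γ x) ⁻¹' {f x} := by
    ext; simp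
  rw [this]
  exact Finset.measurableSet_biInter _ fun x _ => measurable_pi_apply x (by simp)

theorem map_shift {P : Measure (Config d)} (hP : IsBernoulliHalfProduct P) (z : Site d) :
    P.map (shiftCfg z) = P := by
  classical
  have := hP.1
  have h : IsBernoulliHalfProduct (P.map (shiftCfg z)) := by
    refine ⟨Measure.isProbabilityMeasure_map (measurable_shift z).aemeasurable, fun s f => ?_⟩
    rw [Measure.map_apply (measurable_shift z) (meas_cyl s f)]
    have h2 := hP.2 (s.image fun x => x - z) (fun x => f (x + z))
    rw [Finset.card_image_of_injective _ (sub_left_injective)] at h2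
    rw [← h2]
    congr 1
    ext γ
    simp [shiftCfg]
  rw [bern_eq h, ← bern_eq hP]

theorem map_flip {P : Measure (Config d)} (hP : IsBernoulliHalfProduct P) (z : Site d) :
    P.map (flip z) = P := by
  classical
  have := hP.1
  have h : IsBernoulliHalfProduct (P.map (flip z)) := by
    refine ⟨Measure.isProbabilityMeasure_map (measurable_flip z).aemeasurable, fun s f => ?_⟩
    rw [Measure.map_apply (measurable_flip z) (meas_cyl s f)]
    rw [← hP.2 s (fun x => if x = z then !(f x) else f x)]
    congr 1
    ext γ
    simp only [Set.mem_preimage, Set.mem_ofPred_eq, flip]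
    refine forall₂_congr fun x _ => ?_
    split_ifs
    · rcases γ x <;> rcases f x <;> simp
    · rfl
  rw [bern_eq h, ← bern_eq hP]

/-- local functions -/
def Loc {α : Type*} (f : Config d → α) : Prop :=
  ∃ F : Finset (Site d), ∀ γ γ' : Config d, (∀ x ∈ F, γ x = γ' x) → f γ = f γ'

theorem Loc.of_agree {α : Type*} {f : Config d → α} (x : Site d) (r : ℕ)
    (h : ∀ γ γ', Agree γ γ' x r → f γ = f γ') : Loc f := by
  classical
  refine ⟨(box d r).image fun y => y + x, fun γ γ' hh => h γ γ' fun y hy => hh y ?_⟩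
  exact Finset.mem_image.2 ⟨_, hy, by simp⟩

theorem Loc.const {α : Type*} (a : α) : Loc (fun _ : Config d => a) := ⟨∅, fun _ _ _ => rfl⟩

theorem Loc.comp {α β : Type*} {f : Config d → α} (hf : Loc f) (g : α → β) :
    Loc (fun γ => g (f γ)) := by
  obtain ⟨F, hF⟩ := hf
  exact ⟨F, fun γ γ' h => by simp only [hF γ γ' h]⟩

theorem Loc.comp₂ {α β δ : Type*} {f : Config d → α} {g : Config d → β} (hf : Loc f) (hg : Loc g)
    (k : α → β → δ) : Loc (fun γ => k (f γ) (g γ)) := by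
  classical
  obtain ⟨F, hF⟩ := hf
  obtain ⟨G, hG⟩ := hg
  refine ⟨F ∪ G, fun γ γ' h => ?_⟩
  simp only [hF γ γ' fun x hx => h x (Finset.mem_union_left _ hx),
    hG γ γ' fun x hx => h x (Finset.mem_union_right _ hx)]

theorem Loc.and {p q : Config d → Prop} (hp : Loc p) (hq : Loc q) : Loc (fun γ => p γ ∧ q γ) :=
  hp.comp₂ hq _
theorem Loc.not {p : Config d → Prop} (hp : Loc p) : Loc (fun γ => ¬ p γ) := hp.comp _
theorem Loc.add {f g : Config d → ℝ} (hf : Loc f) (hg : Loc g) : Loc (fun γ => f γ + g γ) :=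
  hf.comp₂ hg _
theorem Loc.mul {f g : Config d → ℝ} (hf : Loc f) (hg : Loc g) : Loc (fun γ => f γ * g γ) :=
  hf.comp₂ hg _
theorem Loc.sub {f g : Config d → ℝ} (hf : Loc f) (hg : Loc g) : Loc (fun γ => f γ - g γ) :=
  hf.comp₂ hg _

theorem Loc.sum {ι : Type*} (s : Finset ι) {f : ι → Config d → ℝ} (hf : ∀ i ∈ s, Loc (f i)) :
    Loc (fun γ => ∑ i ∈ s, f i γ) := by
  classical
  choose! F hF using hf
  refine ⟨s.biUnion F, fun γ γ' h => Finset.sum_congr rfl fun i hi => hF i hi γ γ' fun x hx => h x ?_⟩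
  exact Finset.mem_biUnion.2 ⟨i, hi, hx⟩

theorem Loc.flip {α : Type*} {f : Config d → α} (hf : Loc f) (x : Site d) :
    Loc (fun γ => f (flip x γ)) := by
  obtain ⟨F, hF⟩ := hf
  refine ⟨F, fun γ γ' h => hF _ _ fun y hy => ?_⟩
  unfold MB.flip
  rw [h y hy]

theorem Loc.coord (x : Site d) : Loc (fun γ : Config d => γ x) :=
  ⟨{x}, fun γ γ' h => h x (by simp)⟩

theorem Loc.measurable {α : Type*} [MeasurableSpace α] {f : Config d → α} (hf : Loc f) :
    Measurable f := by
  classical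
  obtain ⟨F, hF⟩ := hf
  let e : (F → Bool) → Config d := fun g x => if h : x ∈ F then g ⟨x, h⟩ else false
  have h : f = (fun g => f (e g)) ∘ (fun γ : Config d => fun x : F => γ x) := by
    ext γ
    refine hF _ _ fun x hx => ?_
    simp [e, hx]
  rw [h]
  refine (measurable_of_finite _).comp ?_
  exact measurable_pi_lambda _ fun x => measurable_pi_apply _

theorem Loc.bdd {f : Config d → ℝ} (hf : Loc f) : ∃ C, ∀ γ, ‖f γ‖ ≤ C := by
  classical
  obtain ⟨F, hF⟩ := hf
  let e : (F → Bool) → Config d := fun g x => if h : x ∈ F then g ⟨x, h⟩ else false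
  obtain ⟨C, hC⟩ := (Set.finite_range fun g => ‖f (e g)‖).bddAbove
  refine ⟨C, fun γ => ?_⟩
  rw [hF γ (e fun x => γ x) fun x hx => by simp [e, hx]]
  exact hC ⟨fun x => γ x, rfl⟩

theorem Loc.integrable {P : Measure (Config d)} [IsProbabilityMeasure P] {f : Config d → ℝ}
    (hf : Loc f) : Integrable f P := by
  obtain ⟨C, hC⟩ := hf.bdd
  exact Integrable.of_bound hf.measurable.aestronglyMeasurable C (Filter.Eventually.of_forall hC)

open Classical in
/-- indicator -/
def ind (p : Prop) : ℝ := if p then 1 else 0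

theorem ind_nonneg (p : Prop) : 0 ≤ ind p := by unfold ind; split_ifs <;> norm_num
theorem ind_le_one (p : Prop) : ind p ≤ 1 := by unfold ind; split_ifs <;> norm_num
theorem ind_mono {p q : Prop} (h : p → q) : ind p ≤ ind q := by
  unfold ind; split_ifs <;> first | tauto | norm_num
theorem ind_true {p : Prop} (h : p) : ind p = 1 := by simp [ind, h]
theorem ind_false {p : Prop} (h : ¬ p) : ind p = 0 := by simp [ind, h]
theorem ind_and (p q : Prop) : ind (p ∧ q) = ind p * ind q := by
  by_cases hp : p <;> by_cases hq : q <;> simp [ind, hp, hq]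
theorem ind_le_sum {ι : Type*} (s : Finset ι) {p : Prop} {q : ι → Prop}
    (h : p → ∃ i ∈ s, q i) : ind p ≤ ∑ i ∈ s, ind (q i) := by
  by_cases hp : p
  · obtain ⟨i, hi, hq⟩ := h hp
    rw [ind_true hp, ← ind_true hq]
    exact Finset.single_le_sum (f := fun i => ind (q i)) (fun _ _ => ind_nonneg _) hi
  · rw [ind_false hp]; exact Finset.sum_nonneg fun _ _ => ind_nonneg _

theorem Loc.ind {p : Config d → Prop} (hp : Loc p) : Loc (fun γ => ind (p γ)) := hp.comp _

section
variable {P : Measure (Config d)}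

theorem E_mono (hP : IsBernoulliHalfProduct P) {f g : Config d → ℝ} (hf : Loc f) (hg : Loc g)
    (h : ∀ γ, f γ ≤ g γ) : ∫ γ, f γ ∂P ≤ ∫ γ, g γ ∂P := by
  have := hP.1
  exact integral_mono hf.integrable hg.integrable h

theorem E_add (hP : IsBernoulliHalfProduct P) {f g : Config d → ℝ} (hf : Loc f) (hg : Loc g) :
    ∫ γ, (f γ + g γ) ∂P = ∫ γ, f γ ∂P + ∫ γ, g γ ∂P := by
  have := hP.1
  exact integral_add hf.integrable hg.integrable

theorem E_sub (hP : IsBernoulliHalfProduct P) {f g : Config d → ℝ} (hf : Loc f) (hg : Loc g) :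
    ∫ γ, (f γ - g γ) ∂P = ∫ γ, f γ ∂P - ∫ γ, g γ ∂P := by
  have := hP.1
  exact integral_sub hf.integrable hg.integrable

theorem E_sum (hP : IsBernoulliHalfProduct P) {ι : Type*} (s : Finset ι) {f : ι → Config d → ℝ}
    (hf : ∀ i ∈ s, Loc (f i)) :
    ∫ γ, (∑ i ∈ s, f i γ) ∂P = ∑ i ∈ s, ∫ γ, f i γ ∂P := by
  have := hP.1
  exact integral_finsetSum s fun i hi => (hf i hi).integrable

theorem E_shift (hP : IsBernoulliHalfProduct P) (z : Site d) {f : Config d → ℝ} (hf : Loc f) :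
    ∫ γ, f (shiftCfg z γ) ∂P = ∫ γ, f γ ∂P := by
  conv_rhs => rw [← map_shift hP z]
  rw [integral_map (measurable_shift z).aemeasurable hf.measurable.aestronglyMeasurable]

theorem E_flip (hP : IsBernoulliHalfProduct P) (z : Site d) {f : Config d → ℝ} (hf : Loc f) :
    ∫ γ, f (flip z γ) ∂P = ∫ γ, f γ ∂P := by
  conv_rhs => rw [← map_flip hP z]
  rw [integral_map (measurable_flip z).aemeasurable hf.measurable.aestronglyMeasurable]

/-- all ones on `W` -/
def Ones (γ : Config d) (W : Finset (Site d)) : Prop := ∀ x ∈ W, γ x = true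

theorem Loc.ones (W : Finset (Site d)) : Loc (fun γ : Config d => Ones γ W) :=
  ⟨W, fun γ γ' h => by
    unfold Ones
    exact propext (forall₂_congr fun x hx => by rw [h x hx])⟩

theorem E_ones (hP : IsBernoulliHalfProduct P) (W : Finset (Site d)) {f : Config d → ℝ} (hf : Loc f)
    (h : ∀ x ∈ W, ∀ γ, f (flip x γ) = f γ) :
    ∫ γ, f γ * ind (Ones γ W) ∂P = (1 / 2) ^ W.card * ∫ γ, f γ ∂P := by
  classical
  induction W using Finset.induction_on with
  | empty => simp [Ones, ind]
  | insert x W hx ih =>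
    have ih := ih fun y hy => h y (Finset.mem_insert_of_mem hy)
    have hl : Loc (fun γ => f γ * ind (Ones γ W)) := hf.mul (Loc.ones W).ind
    have hl2 : Loc (fun γ => f γ * ind (Ones γ (insert x W))) := hf.mul (Loc.ones _).ind
    have e1 : ∀ γ : Config d, f (flip x γ) * ind (Ones (flip x γ) (insert x W)) +
        f γ * ind (Ones γ (insert x W)) = f γ * ind (Ones γ W) := by
      intro γ
      rw [h x (Finset.mem_insert_self _ _)]
      have e2 : Ones (flip x γ) W ↔ Ones γ W := by
        refine forall₂_congr fun y hy => ?_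
        rw [flip_of_ne]; rintro rfl; exact hx hy
      have e3 : ∀ γ : Config d, Ones γ (insert x W) ↔ γ x = true ∧ Ones γ W := fun γ => by
        simp [Ones]
      rw [e3, e3, e2, flip_same, ind_and, ind_and]
      cases γ x <;> simp [ind]
    have e4 := E_flip hP x hl2
    have e5 := E_add hP (hl2.flip x) hl2
    rw [e4] at e5
    simp only [e1] at e5
    rw [ih] at e5
    rw [Finset.card_insert_of_notMem hx, pow_succ]
    linarith

theorem P_ones (hP : IsBernoulliHalfProduct P) (W : Finset (Site d)) :
    ∫ γ, ind (Ones γ W) ∂P = (1 / 2) ^ W.card := by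
  have := hP.1
  have := E_ones hP W (f := fun _ => 1) (Loc.const _) (by simp)
  simpa using this

end
end MB

namespace MB
variable {d : ℕ} {P : Measure (Config d)}

theorem Loc_phi (j : ℕ) (x : Site d) : Loc (fun γ : Config d => phi j γ x) :=
  Loc.of_agree x (rho d j) fun _ _ h => phi_local j h

theorem Loc_seed (m : ℕ) (s : Site d) : Loc (fun γ : Config d => Seed γ m s) :=
  Loc.of_agree s m fun _ _ h => propext (seed_local h)

theorem Loc_owner (m R : ℕ) (x s : Site d) : Loc (fun γ : Config d => Owner γ m R x s) :=
  Loc.of_agree x (R + m) fun _ _ h => propext (owner_local h)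

theorem Loc_noowner (m R : ℕ) (x : Site d) : Loc (fun γ : Config d => ¬ ∃ s, Owner γ m R x s) :=
  Loc.of_agree x (R + m) fun γ γ' h => by
    simp only [owner_local h]

theorem Loc_cell (m R q : ℕ) (s v : Site d) : Loc (fun γ : Config d => cell γ m R q s v) :=
  Loc.of_agree s (2 * R + m) fun _ _ h => cell_local h

/-- unmatched probability -/
def pp (P : Measure (Config d)) (j : ℕ) : ℝ := ∫ γ, ind (phi j γ 0 = 0) ∂P

def Sv (γ : Config d) (m R q : ℕ) (v : Site d) : ℝ := ∑ y ∈ cell γ m R q 0 v, (pm1 γ y : ℝ)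

theorem Loc_Sv (m R q : ℕ) (v : Site d) : Loc (fun γ : Config d => Sv γ m R q v) := by
  refine Loc.of_agree 0 (2 * R + m) fun γ γ' h => ?_
  unfold Sv
  rw [cell_local h]
  refine Finset.sum_congr rfl fun y hy => ?_
  have h2 := cell_sub_box hy
  have : γ y = γ' y := h y (by
    rw [sub_zero, mem_box] at *
    intro k
    have := h2 k
    push_cast
    linarith)
  simp [pm1, this]

/-- crossing count -/
def Dn (j : ℕ) (γ : Config d) (y : Site d) : ℝ :=
  ∑ i ∈ (Finset.range j).filter (fun i => lev (i + 1) < lev (j + 1)),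
    ∑ s ∈ nearGrid d (RR (lev (j + 1))) (i + 1) (j + 1),
      ind (phi i γ y = y ∧ Seed γ (mm d (lev (j + 1))) (s + y))

theorem Dn_nonneg (j : ℕ) (γ : Config d) (y : Site d) : 0 ≤ Dn j γ y :=
  Finset.sum_nonneg fun _ _ => Finset.sum_nonneg fun _ _ => ind_nonneg _

theorem Loc_Dn (j : ℕ) (y : Site d) : Loc (fun γ : Config d => Dn j γ y) := by
  refine Loc.sum _ fun i _ => Loc.sum _ fun s _ => Loc.ind (Loc.and ?_ (Loc_seed _ _))
  exact (Loc_phi i y).comp (fun z => z = y)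

theorem phi_fix_shift (j : ℕ) (γ : Config d) (z x : Site d) :
    phi j (shiftCfg z γ) (x + z) = x + z ↔ phi j γ x = x := by
  rw [phi_shift]; exact add_left_inj z

theorem Dn_shift (j : ℕ) (γ : Config d) (z y : Site d) : Dn j (shiftCfg z γ) (y + z) = Dn j γ y := by
  unfold Dn
  refine Finset.sum_congr rfl fun i _ => Finset.sum_congr rfl fun s _ => ?_
  rw [phi_fix_shift, ← add_assoc, seed_shift]

theorem cross_Dn {γ : Config d} {j : ℕ} {y : Site d}
    (ho : Owner γ (mm d (lev (j+1))) (RR (lev (j+1))) y 0)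
    (h1 : phi j γ y ≠ y) (h2 : ¬ SC γ (j + 1) y (phi j γ y)) : 1 ≤ Dn j γ y := by
  have ho' := (owner_shift (z := -y)).2 ho
  have hp : phi j (shiftCfg (-y) γ) 0 = phi j γ y + -y := by
    have := phi_shift j γ (-y) y
    rwa [add_neg_cancel] at this
  rw [add_neg_cancel] at ho'
  have h1' : phi j (shiftCfg (-y) γ) 0 ≠ 0 := by
    rw [hp]; intro h; exact h1 (add_neg_eq_zero.1 h)
  have h2' : ¬ SC (shiftCfg (-y) γ) (j + 1) 0 (phi j (shiftCfg (-y) γ) 0) := by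
    rw [hp]
    have := SC_shift (j := j + 1) (γ := γ) (z := -y) (x := y) (y := phi j γ y)
    rw [add_neg_cancel] at this
    rwa [this]
  obtain ⟨i, hi, hl, h3, s, hs, h4⟩ := cross_lemma ho' h1' h2'
  have h3' : phi i γ y = y := by
    have := phi_shift i γ (-y) y
    rw [add_neg_cancel, h3] at this
    exact (add_neg_eq_zero.1 this.symm)
  have h4' : Seed γ (mm d (lev (j+1))) (s + y) := by
    rw [← seed_shift (z := -y)]; simpa using h4
  unfold Dn
  have hi' : i ∈ (Finset.range j).filter (fun i => lev (i + 1) < lev (j + 1)) := by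
    simp only [Finset.mem_filter, Finset.mem_range]; exact ⟨hi, hl⟩
  refine le_trans ?_ (Finset.single_le_sum (f := fun i => ∑ s ∈ nearGrid d (RR (lev (j + 1))) (i + 1) (j + 1),
      ind (phi i γ y = y ∧ Seed γ (mm d (lev (j + 1))) (s + y)))
      (fun _ _ => Finset.sum_nonneg fun _ _ => ind_nonneg _) hi')
  refine le_trans ?_ (Finset.single_le_sum (f := fun s =>
      ind (phi i γ y = y ∧ Seed γ (mm d (lev (j + 1))) (s + y)))
      (fun _ _ => ind_nonneg _) hs)
  exact (ind_true ⟨h3', h4'⟩).ge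

/-- mass transport -/
theorem transport (hP : IsBernoulliHalfProduct P) (m R : ℕ) {f : Config d → Site d → ℝ}
    (hf : ∀ x, Loc (fun γ => f γ x)) (hs : ∀ γ z x, f (shiftCfg z γ) (x + z) = f γ x) :
    ∑ s ∈ box d R, ∫ γ, ind (Owner γ m R 0 s) * f γ 0 ∂P =
      ∑ y ∈ box d R, ∫ γ, ind (Owner γ m R y 0) * f γ y ∂P := by
  refine Finset.sum_nbij' (fun s => -s) (fun s => -s) (fun s hs => neg_mem_box.2 hs)
    (fun s hs => neg_mem_box.2 hs) (by simp) (by simp) fun s _ => ?_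
  rw [← E_shift hP (-s) ((Loc_owner m R (-s) 0).ind.mul (hf (-s)))]
  refine integral_congr_ae (Filter.Eventually.of_forall fun γ => ?_)
  have e1 := hs γ (-s) 0
  have e2 := owner_shift (γ := γ) (m := m) (R := R) (x := 0) (s := s) (z := -s)
  rw [zero_add] at e1 e2
  rw [add_neg_cancel] at e2
  simp only [e1, e2]

theorem owner_box {γ : Config d} {m R : ℕ} {y : Site d} (h : Owner γ m R y 0) : y ∈ box d R := by
  have := h.1
  rwa [zero_sub, neg_mem_box] at this

theorem sum_ind_eq_card {α : Type*} (s : Finset α) (p : α → Prop) [DecidablePred p] :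
    ∑ y ∈ s, ind (p y) = ((s.filter p).card : ℝ) := by
  rw [Finset.card_filter]
  push_cast
  refine Finset.sum_congr rfl fun y _ => ?_
  unfold ind
  split_ifs <;> simp

theorem pointwise (γ : Config d) (j : ℕ) :
    ∑ y ∈ box d (RR (lev (j+1))),
      ind (Owner γ (mm d (lev (j+1))) (RR (lev (j+1))) y 0) * ind (phi (j + 1) γ y = y) ≤
    ∑ v ∈ (box d (RR (lev (j+1)))).image (gi (2 ^ (j + 1))),
        |Sv γ (mm d (lev (j+1))) (RR (lev (j+1))) (2 ^ (j + 1)) v| +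
    ∑ y ∈ box d (RR (lev (j+1))),
      ind (Owner γ (mm d (lev (j+1))) (RR (lev (j+1))) y 0) * Dn j γ y := by
  classical
  set m := mm d (lev (j+1))
  set R := RR (lev (j+1))
  set q := 2 ^ (j + 1)
  have hfib : ∀ f : Site d → ℝ, ∑ y ∈ box d R, ind (Owner γ m R y 0) * f y =
      ∑ v ∈ (box d R).image (gi q), ∑ y ∈ cell γ m R q 0 v, f y := by
    intro f
    rw [← Finset.sum_fiberwise_of_maps_to (s := box d R) (t := (box d R).image (gi q)) (g := gi q)
      (fun y hy => Finset.mem_image_of_mem _ hy)]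
    refine Finset.sum_congr rfl fun v _ => ?_
    have : cell γ m R q 0 v = ((box d R).filter fun y => gi q y = v).filter fun y => Owner γ m R y 0 := by
      ext y
      simp only [mem_cell, Finset.mem_filter, zero_add]
      constructor
      · rintro ⟨h1, h2⟩
        exact ⟨⟨owner_box h1, h2⟩, h1⟩
      · rintro ⟨⟨_, h2⟩, h1⟩; exact ⟨h1, h2⟩
    rw [this, Finset.sum_filter (fun y => Owner γ m R y 0)]
    refine Finset.sum_congr rfl fun y _ => ?_
    unfold ind
    split_ifs <;> simp
  rw [hfib, hfib, ← Finset.sum_add_distrib]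
  refine Finset.sum_le_sum fun v _ => ?_
  have h := card_unmatched_le (phi_good j γ) m R q 0 v
  simp only [zero_add] at h
  have h' : ((((cell γ m R q 0 v).filter fun y => phi (j + 1) γ y = y).card : ℝ)) ≤
      |Sv γ m R q v| + (((cell γ m R q 0 v).filter fun y => phi j γ y ≠ y ∧
        ¬ SameCell γ m R q y (phi j γ y)).card : ℝ) := by
    have h2 : (((((cell γ m R q 0 v).filter fun y => step γ (phi j γ) m R q y = y).card : ℤ)) : ℝ) ≤ _ :=
      Int.cast_le.2 h
    push_cast at h2
    unfold Sv
    exact h2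
  rw [sum_ind_eq_card]
  refine h'.trans ?_
  gcongr
  rw [← sum_ind_eq_card]
  refine Finset.sum_le_sum fun y hy => ?_
  by_cases hc : phi j γ y ≠ y ∧ ¬ SameCell γ m R q y (phi j γ y)
  · rw [ind_true hc]
    have := (mem_cell.1 hy).1
    rw [zero_add] at this
    exact cross_Dn this hc.1 hc.2
  · rw [ind_false hc]; exact Dn_nonneg _ _ _

theorem main_ineq (hP : IsBernoulliHalfProduct P) (j : ℕ) :
    pp P (j + 1) ≤ ∫ γ, ind (¬ ∃ s, Owner γ (mm d (lev (j+1))) (RR (lev (j+1))) 0 s) ∂P +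
    ∑ v ∈ (box d (RR (lev (j+1)))).image (gi (2 ^ (j + 1))),
        ∫ γ, |Sv γ (mm d (lev (j+1))) (RR (lev (j+1))) (2 ^ (j + 1)) v| ∂P +
    ∫ γ, Dn j γ 0 ∂P := by
  classical
  set m := mm d (lev (j+1)) with hm
  set R := RR (lev (j+1)) with hR
  set q := 2 ^ (j + 1) with hq
  have L1 : ∀ x : Site d, Loc (fun γ : Config d => ind (phi (j + 1) γ x = x)) := fun x =>
    Loc.ind ((Loc_phi (j + 1) x).comp (fun z => z = x))
  have Lo : ∀ x s : Site d, Loc (fun γ : Config d => ind (Owner γ m R x s)) := fun x s =>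
    (Loc_owner m R x s).ind
  have LS : ∀ v : Site d, Loc (fun γ : Config d => |Sv γ m R q v|) := fun v => (Loc_Sv m R q v).comp _
  have h1 : pp P (j + 1) ≤ ∫ γ, (ind (¬ ∃ s, Owner γ m R 0 s) +
      ∑ s ∈ box d R, ind (Owner γ m R 0 s) * ind (phi (j + 1) γ 0 = 0)) ∂P := by
    refine E_mono hP (L1 0) ((Loc_noowner m R 0).ind.add (Loc.sum _ fun s _ => (Lo 0 s).mul (L1 0))) fun γ => ?_
    by_cases h : ∃ s, Owner γ m R 0 s
    · obtain ⟨s, hs⟩ := h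
      have hb : s ∈ box d R := by simpa using hs.1
      have := Finset.single_le_sum (f := fun s => ind (Owner γ m R 0 s) * ind (phi (j + 1) γ 0 = 0))
        (fun _ _ => mul_nonneg (ind_nonneg _) (ind_nonneg _)) hb
      simp only [ind_true hs, one_mul] at this
      have h0 := ind_nonneg (¬ ∃ s, Owner γ m R 0 s)
      linarith
    · rw [ind_true h]
      have : 0 ≤ ∑ s ∈ box d R, ind (Owner γ m R 0 s) * ind (phi (j + 1) γ 0 = 0) :=
        Finset.sum_nonneg fun _ _ => mul_nonneg (ind_nonneg _) (ind_nonneg _)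
      linarith [ind_le_one (phi (j + 1) γ 0 = 0)]
  rw [E_add hP (Loc_noowner m R 0).ind (Loc.sum _ fun s _ => (Lo 0 s).mul (L1 0)),
    E_sum hP _ (fun s _ => (Lo 0 s).mul (L1 0))] at h1
  rw [transport hP m R (f := fun γ x => ind (phi (j + 1) γ x = x)) L1
    (fun γ z x => by rw [phi_fix_shift]), ← E_sum hP _ (fun s _ => (Lo s 0).mul (L1 s))] at h1
  have h2 := E_mono hP (Loc.sum _ fun s _ => (Lo s 0).mul (L1 s))
    ((Loc.sum ((box d R).image (gi q)) fun v _ => LS v).add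
      (Loc.sum (box d R) fun s _ => (Lo s 0).mul (Loc_Dn j s))) (fun γ => pointwise γ j)
  rw [E_add hP (Loc.sum ((box d R).image (gi q)) fun v _ => LS v)
      (Loc.sum (box d R) fun s _ => (Lo s 0).mul (Loc_Dn j s)), E_sum hP _ (fun v _ => LS v),
    E_sum hP _ (fun s _ => (Lo s 0).mul (Loc_Dn j s)),
    ← transport hP m R (Loc_Dn j) (Dn_shift j), ← E_sum hP _ (fun s _ => (Lo 0 s).mul (Loc_Dn j 0))] at h2
  have h3 : ∫ γ, (∑ s ∈ box d R, ind (Owner γ m R 0 s) * Dn j γ 0) ∂P ≤ ∫ γ, Dn j γ 0 ∂P := by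
    refine E_mono hP (Loc.sum _ fun s _ => (Lo 0 s).mul (Loc_Dn j 0)) (Loc_Dn j 0) fun γ => ?_
    rw [← Finset.sum_mul]
    refine mul_le_of_le_one_left (Dn_nonneg _ _ _) ?_
    rw [sum_ind_eq_card]
    have : ((box d R).filter fun s => Owner γ m R 0 s).card ≤ 1 := by
      rw [Finset.card_le_one]
      intro a ha b hb
      exact (Finset.mem_filter.1 ha).2.unique (Finset.mem_filter.1 hb).2
    exact_mod_cast this
  linarith

end MB

namespace MB
variable {d : ℕ} {P : Measure (Config d)}

theorem e1_zero (hd : 0 < d) : e1 d ⟨0, hd⟩ = 1 := by simp [e1]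

theorem card_win (hd : 0 < d) (m : ℕ) (s : Site d) : (win m s).card = m := by
  unfold win
  rw [Finset.card_image_of_injective, Finset.card_range]
  intro a b h
  have := congrFun h ⟨0, hd⟩
  simp only [Pi.add_apply, Pi.smul_apply, e1_zero hd, smul_eq_mul, mul_one] at this
  omega

theorem P_seed (hP : IsBernoulliHalfProduct P) (hd : 0 < d) (m : ℕ) (s : Site d) :
    ∫ γ, ind (Seed γ m s) ∂P = (1 / 2) ^ m := by
  have := P_ones hP (win m s)
  rwa [card_win hd] at this

theorem seed_flip {γ : Config d} {m : ℕ} {x s : Site d}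
    (h : ¬ (x ∈ win m s ∧ Ones γ ((win m s).erase x))) : Seed (flip x γ) m s ↔ Seed γ m s := by
  by_cases hx : x ∈ win m s
  · have h2 : ¬ Ones γ ((win m s).erase x) := fun h3 => h ⟨hx, h3⟩
    have h4 : ∀ γ', (∀ y, y ≠ x → γ' y = γ y) → ¬ Seed γ' m s := by
      intro γ' hγ hs
      apply h2
      intro y hy
      rw [← hγ y (Finset.ne_of_mem_erase hy)]
      exact hs y (Finset.mem_of_mem_erase hy)
    exact iff_of_false (h4 _ fun y hy => flip_of_ne hy γ) (h4 _ fun _ _ => rfl)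
  · refine forall₂_congr fun y hy => ?_
    rw [flip_of_ne]; rintro rfl; exact hx hy

theorem flip_bound (γ : Config d) (m R : ℕ) {x y : Site d} (hx : x ∉ win m 0) :
    |ind (Owner γ m R x 0) * ind (Owner γ m R y 0) -
      ind (Owner (flip x γ) m R x 0) * ind (Owner (flip x γ) m R y 0)| ≤
    ∑ t ∈ Finset.range m,
      ind (Ones γ (win m 0 ∪ (win m (x - (t : ℤ) • e1 d)).erase x)) := by
  have hnn : 0 ≤ ∑ t ∈ Finset.range m,
      ind (Ones γ (win m 0 ∪ (win m (x - (t : ℤ) • e1 d)).erase x)) :=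
    Finset.sum_nonneg fun _ _ => ind_nonneg _
  have h0 : Seed (flip x γ) m 0 ↔ Seed γ m 0 := seed_flip fun h => hx h.1
  by_cases hs : Seed γ m 0
  swap
  · have a1 : ∀ z, ¬ Owner γ m R z 0 := fun z h => hs h.2.1
    have a2 : ∀ z, ¬ Owner (flip x γ) m R z 0 := fun z h => hs (h0.1 h.2.1)
    rw [ind_false (a1 x), ind_false (a2 x)]
    simpa using hnn
  by_cases hex : ∃ s, x ∈ win m s ∧ Ones γ ((win m s).erase x)
  · obtain ⟨s, h1, h2⟩ := hex
    obtain ⟨t, ht, hst⟩ := mem_win.1 h1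
    have hs' : s = x - (t : ℤ) • e1 d := by rw [← hst]; abel
    subst hs'
    have h3 : Ones γ (win m 0 ∪ (win m (x - (t : ℤ) • e1 d)).erase x) := by
      intro z hz
      rcases Finset.mem_union.1 hz with hz | hz
      · exact hs z hz
      · exact h2 z hz
    have h4 := Finset.single_le_sum (f := fun t : ℕ => ind (Ones γ (win m 0 ∪ (win m (x - (t : ℤ) • e1 d)).erase x)))
      (fun _ _ => ind_nonneg _) (Finset.mem_range.2 ht)
    simp only [ind_true h3] at h4
    refine le_trans ?_ h4
    have b1 : ∀ p q : Prop, 0 ≤ ind p * ind q ∧ ind p * ind q ≤ 1 := fun p q =>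
      ⟨mul_nonneg (ind_nonneg _) (ind_nonneg _), by
        rw [← ind_and]; exact ind_le_one _⟩
    have b2 := b1 (Owner γ m R x 0) (Owner γ m R y 0)
    have b3 := b1 (Owner (flip x γ) m R x 0) (Owner (flip x γ) m R y 0)
    rw [abs_le]; constructor <;> linarith [b2.1, b2.2, b3.1, b3.2]
  · have h5 : ∀ s, Seed (flip x γ) m s ↔ Seed γ m s := fun s => seed_flip fun h => hex ⟨s, h⟩
    have h6 : ∀ z, Owner (flip x γ) m R z 0 ↔ Owner γ m R z 0 := by
      intro z; unfold Owner; simp only [h5]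
    simp only [h6, sub_self, abs_zero]
    exact hnn

theorem card_two_win (hd : 0 < d) (m t : ℕ) (ht : t < m) {x : Site d} (hx : x ∉ box d (2 * m)) :
    (win m 0 ∪ (win m (x - (t : ℤ) • e1 d)).erase x).card = 2 * m - 1 := by
  rw [Finset.card_union_of_disjoint, Finset.card_erase_of_mem, card_win hd, card_win hd]
  · omega
  · exact mem_win.2 ⟨t, ht, by abel⟩
  · rw [Finset.disjoint_left]
    intro z h1 h2
    obtain ⟨a, ha, rfl⟩ := mem_win.1 h1
    obtain ⟨b, hb, h3⟩ := mem_win.1 (Finset.mem_of_mem_erase h2)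
    apply hx
    have h4 : x = ((a : ℤ) + t - b) • e1 d := by
      rw [sub_smul, add_smul, ← zero_add ((a : ℤ) • e1 d), ← h3]; abel
    rw [mem_box]
    intro k
    rw [h4]
    simp only [Pi.smul_apply, e1, smul_eq_mul]
    split_ifs
    · rw [abs_le]; push_cast; constructor <;> omega
    · simp

/-- covariance -/
def cv (P : Measure (Config d)) (m R : ℕ) (x y : Site d) : ℝ :=
  ∫ γ, (ind (Owner γ m R x 0) * ind (Owner γ m R y 0)) * ((pm1 γ x : ℝ) * pm1 γ y) ∂P

theorem Loc_pm1 (x : Site d) : Loc (fun γ : Config d => (pm1 γ x : ℝ)) :=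
  (Loc.coord x).comp (fun b => (((if b then 1 else -1 : ℤ)) : ℝ))

theorem abs_pm1 (γ : Config d) (x : Site d) : |(pm1 γ x : ℝ)| = 1 := by
  unfold pm1; split_ifs <;> simp

theorem mul_pm_le (a : ℝ) (γ : Config d) (x y : Site d) : a * ((pm1 γ x : ℝ) * pm1 γ y) ≤ |a| := by
  refine (le_abs_self _).trans ?_
  rw [abs_mul, abs_mul, abs_pm1, abs_pm1]; simp

theorem Loc_cv (m R : ℕ) (x y : Site d) : Loc (fun γ : Config d =>
    (ind (Owner γ m R x 0) * ind (Owner γ m R y 0)) * ((pm1 γ x : ℝ) * pm1 γ y)) :=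
  ((Loc_owner m R x 0).ind.mul (Loc_owner m R y 0).ind).mul ((Loc_pm1 x).mul (Loc_pm1 y))

theorem cv_le (hP : IsBernoulliHalfProduct P) (hd : 0 < d) (m R : ℕ) (x y : Site d) :
    cv P m R x y ≤ (1 / 2) ^ m := by
  rw [← P_seed hP hd m 0]
  refine E_mono hP (Loc_cv m R x y) (Loc_seed m 0).ind fun γ => ?_
  refine (mul_pm_le _ _ _ _).trans ?_
  rw [← ind_and, abs_of_nonneg (ind_nonneg _)]
  exact ind_mono fun h => h.1.2.1

theorem cv_le_far (hP : IsBernoulliHalfProduct P) (hd : 0 < d) (m R : ℕ) (hm : 1 ≤ m) {x y : Site d}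
    (hxy : x ≠ y) (hx : x ∉ box d (2 * m)) :
    cv P m R x y ≤ m * (1 / 2) ^ (2 * m) := by
  have hL := Loc_cv (d := d) m R x y
  have h1 := E_flip hP x hL
  have h2 := E_add hP (hL.flip x) hL
  rw [h1] at h2
  have hx0 : x ∉ win m 0 := by
    intro h
    apply hx
    have := win_sub_box h
    rw [sub_zero, mem_box] at this
    rw [mem_box]; intro k
    have := this k
    push_cast; linarith [abs_nonneg (x k)]
  have hLs : Loc (fun γ : Config d => ∑ t ∈ Finset.range m,
      ind (Ones γ (win m 0 ∪ (win m (x - (t : ℤ) • e1 d)).erase x))) :=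
    Loc.sum _ fun t _ => (Loc.ones _).ind
  have h3 := E_mono hP ((hL.flip x).add hL) hLs (fun γ => by
    have e1 : (pm1 (flip x γ) x : ℝ) = - pm1 γ x := by
      unfold pm1; rw [flip_same]; cases γ x <;> simp
    have e2 : (pm1 (flip x γ) y : ℝ) = pm1 γ y := by
      unfold pm1; rw [flip_of_ne hxy.symm]
    rw [e1, e2]
    refine le_trans ?_ (flip_bound γ m R (y := y) hx0)
    refine le_trans (le_of_eq ?_) (mul_pm_le _ γ x y)
    ring)
  rw [E_sum hP _ (fun t _ => (Loc.ones _).ind)] at h3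
  have h4 : ∑ t ∈ Finset.range m, ∫ γ, ind (Ones γ (win m 0 ∪ (win m (x - (t : ℤ) • e1 d)).erase x)) ∂P
      = m * (2 * (1 / 2) ^ (2 * m)) := by
    rw [Finset.sum_congr rfl fun t ht => by
      rw [P_ones hP, card_two_win hd m t (Finset.mem_range.1 ht) hx]]
    rw [Finset.sum_const, Finset.card_range, nsmul_eq_mul]
    congr 1
    obtain ⟨k, rfl⟩ := Nat.exists_eq_add_of_le hm
    rw [show 2 * (1 + k) - 1 = 2 * k + 1 by omega, show 2 * (1 + k) = 2 * k + 1 + 1 by ring, pow_succ _ (2 * k + 1)]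
    ring
  rw [h4] at h3
  have : cv P m R x y + cv P m R x y ≤ m * (2 * (1 / 2) ^ (2 * m)) := by
    unfold cv
    rw [← h2]; exact h3
  linarith

theorem E_Sv (hP : IsBernoulliHalfProduct P) (hd : 0 < d) (m R q : ℕ) (hm : 1 ≤ m) (v : Site d) (T : ℝ)
    (hT : 0 < T) (hG : ((box d R).filter fun y => gi q y = v).card ≤ q ^ d) :
    ∫ γ, |Sv γ m R q v| ∂P ≤ T * (1 / 2) ^ m +
      (q ^ d * (1 / 2) ^ m + (4 * m + 1) ^ d * q ^ d * (1 / 2) ^ m +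
        q ^ d * q ^ d * (m * (1 / 2) ^ (2 * m))) / T := by
  classical
  set G := (box d R).filter fun y => gi q y = v with hGd
  have hG' : (G.card : ℝ) ≤ q ^ d := by exact_mod_cast hG
  have hS : ∀ γ : Config d, Sv γ m R q v = ∑ y ∈ G, ind (Owner γ m R y 0) * (pm1 γ y : ℝ) := by
    intro γ
    unfold Sv
    have : cell γ m R q 0 v = G.filter fun y => Owner γ m R y 0 := by
      ext y
      simp only [mem_cell, hGd, Finset.mem_filter, zero_add]
      constructor
      · rintro ⟨h1, h2⟩
        exact ⟨⟨owner_box h1, h2⟩, h1⟩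
      · rintro ⟨⟨_, h2⟩, h1⟩; exact ⟨h1, h2⟩
    rw [this, Finset.sum_filter]
    refine Finset.sum_congr rfl fun y _ => ?_
    unfold ind
    split_ifs <;> simp
  have hS2 : ∀ γ : Config d, (Sv γ m R q v) ^ 2 = ∑ x ∈ G, ∑ y ∈ G,
      (ind (Owner γ m R x 0) * ind (Owner γ m R y 0)) * ((pm1 γ x : ℝ) * pm1 γ y) := by
    intro γ
    rw [hS, sq, Finset.sum_mul_sum]
    refine Finset.sum_congr rfl fun x _ => Finset.sum_congr rfl fun y _ => ?_
    ring
  have LS2 : Loc (fun γ : Config d => (Sv γ m R q v) ^ 2) := (Loc_Sv m R q v).comp (fun a => a ^ 2)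
  have hE2 : ∫ γ, (Sv γ m R q v) ^ 2 ∂P ≤ q ^ d * (1 / 2) ^ m + (4 * m + 1) ^ d * q ^ d * (1 / 2) ^ m +
        q ^ d * q ^ d * (m * (1 / 2) ^ (2 * m)) := by
    simp only [hS2]
    rw [E_sum hP _ (fun x _ => Loc.sum _ fun y _ => Loc_cv m R x y)]
    rw [Finset.sum_congr rfl fun x _ => E_sum hP G (fun y _ => Loc_cv m R x y)]
    have hb : ∀ x y : Site d, cv P m R x y ≤ ind (x = y) * (1 / 2) ^ m +
        ind (x ∈ box d (2 * m)) * (1 / 2) ^ m + m * (1 / 2) ^ (2 * m) := by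
      intro x y
      have i0 : (0 : ℝ) ≤ m * (1 / 2) ^ (2 * m) := by positivity
      have i1 : (0 : ℝ) ≤ (1 / 2) ^ m := by positivity
      have i2 := mul_nonneg (ind_nonneg (x = y)) i1
      have i3 := mul_nonneg (ind_nonneg (x ∈ box d (2 * m))) i1
      by_cases h1 : x = y
      · have := cv_le hP hd m R x y
        rw [ind_true h1] at *; linarith
      by_cases h2 : x ∈ box d (2 * m)
      · have := cv_le hP hd m R x y
        rw [ind_true h2] at *; linarith
      · have := cv_le_far hP hd m R hm h1 h2
        linarith
    calc ∑ x ∈ G, ∑ y ∈ G, cv P m R x y ≤ ∑ x ∈ G, ∑ y ∈ G, (ind (x = y) * (1 / 2) ^ m +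
        ind (x ∈ box d (2 * m)) * (1 / 2) ^ m + m * (1 / 2) ^ (2 * m)) :=
          Finset.sum_le_sum fun x _ => Finset.sum_le_sum fun y _ => hb x y
      _ = (∑ x ∈ G, ∑ y ∈ G, ind (x = y)) * (1 / 2) ^ m +
          (∑ x ∈ G, ind (x ∈ box d (2 * m))) * G.card * (1 / 2) ^ m +
            G.card * G.card * (m * (1 / 2) ^ (2 * m)) := by
          simp only [Finset.sum_add_distrib, Finset.sum_mul, Finset.sum_const, nsmul_eq_mul]
          congr 1
          · congr 1
            refine Finset.sum_congr rfl fun x _ => ?_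
            ring
          · ring
      _ ≤ _ := by
          have j1 : ∑ x ∈ G, ∑ y ∈ G, ind (x = y) ≤ (q : ℝ) ^ d := by
            refine le_trans (le_of_eq ?_) hG'
            rw [Finset.card_eq_sum_ones]
            push_cast
            refine Finset.sum_congr rfl fun x hx => ?_
            rw [Finset.sum_eq_single x (fun y _ hy => ind_false hy.symm) (fun h => absurd hx h)]
            exact ind_true rfl
          have j2 : ∑ x ∈ G, ind (x ∈ box d (2 * m)) ≤ ((4 * m + 1 : ℝ)) ^ d := by
            rw [sum_ind_eq_card]
            have : (G.filter fun x => x ∈ box d (2 * m)).card ≤ (box d (2 * m)).card :=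
              Finset.card_le_card fun x hx => (Finset.mem_filter.1 hx).2
            rw [card_box] at this
            have h' : (((G.filter fun x => x ∈ box d (2 * m)).card : ℕ) : ℝ) ≤ ((2 * (2 * m) + 1) ^ d : ℕ) := by
              exact_mod_cast this
            refine h'.trans (le_of_eq ?_)
            push_cast; ring
          have j3 : 0 ≤ ∑ x ∈ G, ind (x ∈ box d (2 * m)) := Finset.sum_nonneg fun _ _ => ind_nonneg _
          gcongr
  have hpt : ∀ γ : Config d, |Sv γ m R q v| ≤ T * ind (Seed γ m 0) + (1 / T) * (Sv γ m R q v) ^ 2 := by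
    intro γ
    by_cases hs : Seed γ m 0
    · rw [ind_true hs, ← sq_abs (Sv γ m R q v)]
      set a := |Sv γ m R q v|
      have : 0 ≤ (a - T) ^ 2 / T + a := by positivity
      have e : (a - T) ^ 2 / T + 2 * a = T * 1 + 1 / T * a ^ 2 := by field_simp; ring
      rw [← e]
      have : 0 ≤ (a - T) ^ 2 / T := by positivity
      have : 0 ≤ a := abs_nonneg _
      linarith
    · have : Sv γ m R q v = 0 := by
        rw [hS]
        refine Finset.sum_eq_zero fun y _ => ?_
        rw [ind_false (fun h => hs h.2.1), zero_mul]
      rw [this, ind_false hs]; simp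
  have Lc : ∀ c : ℝ, Loc (fun _ : Config d => c) := fun c => Loc.const c
  have h1 := E_mono hP ((Loc_Sv m R q v).comp abs) (((Lc T).mul (Loc_seed m 0).ind).add ((Lc (1/T)).mul LS2)) hpt
  rw [E_add hP ((Lc T).mul (Loc_seed m 0).ind) ((Lc (1/T)).mul LS2), integral_const_mul, integral_const_mul,
    P_seed hP hd] at h1
  refine h1.trans ?_
  rw [one_div_mul_eq_div]
  gcongr

end MB

namespace MB
variable {d : ℕ} {P : Measure (Config d)}

/-! ### no owner -/

theorem P_noseeds (hP : IsBernoulliHalfProduct P) (hd : 0 < d) (m : ℕ) (T : Finset (Site d))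
    (hT : ∀ s ∈ T, ∀ s' ∈ T, s ≠ s' → Disjoint (win m s) (win m s')) :
    Loc (fun γ : Config d => ∀ s ∈ T, ¬ Seed γ m s) ∧
    ∫ γ, ind (∀ s ∈ T, ¬ Seed γ m s) ∂P = (1 - (1 / 2) ^ m) ^ T.card := by
  classical
  induction T using Finset.induction_on with
  | empty =>
    have := hP.1
    simp [ind, Loc.const]
  | insert s T hs ih =>
    obtain ⟨hL, ih⟩ := ih fun a ha b hb => hT a (Finset.mem_insert_of_mem ha) b (Finset.mem_insert_of_mem hb)
    have e1 : ∀ γ : Config d, (∀ a ∈ insert s T, ¬ Seed γ m a) ↔ (¬ Seed γ m s ∧ ∀ a ∈ T, ¬ Seed γ m a) := by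
      intro γ; simp
    have e2 : ∀ γ : Config d, ind (∀ a ∈ insert s T, ¬ Seed γ m a) =
        ind (∀ a ∈ T, ¬ Seed γ m a) - ind (∀ a ∈ T, ¬ Seed γ m a) * ind (Ones γ (win m s)) := by
      intro γ
      rw [e1, ind_and]
      by_cases h : Seed γ m s
      · rw [ind_false (not_not.2 h), ind_true (p := Ones γ (win m s)) h]; ring
      · rw [ind_true h, ind_false (p := Ones γ (win m s)) h]; ring
    constructor
    · simp only [e1]
      exact (Loc_seed m s).not.and hL
    · simp only [e2]
      rw [E_sub hP hL.ind (hL.ind.mul (Loc.ones _).ind), E_ones hP _ hL.ind, card_win hd, ih,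
        Finset.card_insert_of_notMem hs, pow_succ]
      · ring
      · intro x hx γ
        congr 1
        refine propext (forall₂_congr fun a ha => not_congr (seed_flip fun h => ?_))
        have hne : s ≠ a := by rintro rfl; exact hs ha
        exact Finset.disjoint_left.1 (hT s (Finset.mem_insert_self _ _) a (Finset.mem_insert_of_mem ha) hne) hx h.1

theorem P_noowner (hP : IsBernoulliHalfProduct P) (hd : 0 < d) (m R : ℕ) (hm : 1 ≤ m) :
    ∫ γ, ind (¬ ∃ s, Owner γ m R 0 s) ∂P ≤ Real.exp (-((1 / 2) ^ m * (R : ℝ) ^ d / m)) := by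
  classical
  have hm' : (0 : ℝ) < m := by exact_mod_cast hm
  let i0 : Fin d := ⟨0, hd⟩
  have hmaps : ∀ s ∈ box d R, s i0 % (m : ℤ) ∈ (Finset.range m).image (fun t : ℕ => (t : ℤ)) := by
    intro s _
    have h1 := Int.emod_nonneg (s i0) (show (m : ℤ) ≠ 0 by omega)
    have h2 := Int.emod_lt_of_pos (s i0) (show 0 < (m : ℤ) by omega)
    refine Finset.mem_image.2 ⟨(s i0 % (m : ℤ)).toNat, ?_, ?_⟩
    · rw [Finset.mem_range]; omega
    · omega
  have hcard : ((Finset.range m).image (fun t : ℕ => (t : ℤ))).card = m := by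
    rw [Finset.card_image_of_injective _ Nat.cast_injective, Finset.card_range]
  obtain ⟨c, -, hc⟩ := Finset.exists_le_card_fiber_of_nsmul_le_card_of_maps_to (M := ℝ)
    (b := ((box d R).card : ℝ) / m) hmaps
    (by rw [← Finset.card_pos, hcard]; omega) (by
      rw [hcard, nsmul_eq_mul]; exact le_of_eq (by field_simp))
  set T := (box d R).filter fun s => s i0 % (m : ℤ) = c with hTd
  have hT : ∀ s ∈ T, ∀ s' ∈ T, s ≠ s' → Disjoint (win m s) (win m s') := by
    intro s hs s' hs' hne
    rw [Finset.disjoint_left]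
    intro z hz hz'
    apply hne
    obtain ⟨a, ha, rfl⟩ := mem_win.1 hz
    obtain ⟨b, hb, hab⟩ := mem_win.1 hz'
    have h1 := congrFun hab i0
    simp only [Pi.add_apply, Pi.smul_apply, e1_zero hd, smul_eq_mul, mul_one, i0] at h1
    have h2 : s i0 % (m : ℤ) = s' i0 % (m : ℤ) := by
      rw [(Finset.mem_filter.1 hs).2, (Finset.mem_filter.1 hs').2]
    have h3 := Int.emod_add_mul_ediv (s i0) m
    have h4 := Int.emod_add_mul_ediv (s' i0) m
    have h5 : (m : ℤ) * (s i0 / m - s' i0 / m) = b - a := by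
      have : (s i0 : ℤ) + a = s' i0 + b := h1.symm
      linear_combination this + h3 - h4 - h2
    have h6 : (s i0 / (m : ℤ) - s' i0 / m) = 0 := by
      by_contra h
      have : (1 : ℤ) ≤ |s i0 / (m : ℤ) - s' i0 / m| := Int.one_le_abs h
      have h7 : |(m : ℤ) * (s i0 / m - s' i0 / m)| = |(b : ℤ) - a| := by rw [h5]
      rw [abs_mul, abs_of_nonneg (show (0 : ℤ) ≤ m by omega)] at h7
      have h8 : |(b : ℤ) - a| < m := by rw [abs_lt]; constructor <;> omega
      nlinarith
    rw [h6] at h5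
    have h7 : a = b := by omega
    rw [h7] at hab
    exact (add_right_cancel hab).symm
  obtain ⟨hL, hE⟩ := P_noseeds hP hd m T hT
  calc ∫ γ, ind (¬ ∃ s, Owner γ m R 0 s) ∂P ≤ ∫ γ, ind (∀ s ∈ T, ¬ Seed γ m s) ∂P := by
        refine E_mono hP (Loc_noowner m R 0).ind hL.ind fun γ => ind_mono fun h s hs hs2 => h ?_
        exact exists_owner (s := s) (by rw [sub_zero]; exact (Finset.mem_filter.1 hs).1) hs2
    _ = (1 - (1 / 2) ^ m) ^ T.card := hE
    _ ≤ (Real.exp (-(1 / 2) ^ m)) ^ T.card := by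
        refine pow_le_pow_left₀ ?_ ?_ _
        · have : (1 / 2 : ℝ) ^ m ≤ 1 := pow_le_one₀ (by norm_num) (by norm_num)
          linarith
        · have := Real.add_one_le_exp (-(1 / 2 : ℝ) ^ m)
          linarith
    _ ≤ _ := by
        rw [← Real.exp_nat_mul]
        apply Real.exp_le_exp.2
        rw [mul_neg, neg_le_neg_iff]
        have h1 : ((R : ℝ) ^ d) / m ≤ T.card := by
          refine le_trans ?_ hc
          rw [card_box]
          push_cast
          gcongr
          linarith [Nat.cast_nonneg (α := ℝ) R]
        calc (1 / 2) ^ m * (R : ℝ) ^ d / m = ((R : ℝ) ^ d) / m * (1 / 2) ^ m := by ring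
          _ ≤ _ := by gcongr

/-! ### counting -/

theorem card_fiber_le (R q : ℕ) (hq : 0 < q) (v : Site d) :
    ((box d R).filter fun y => gi q y = v).card ≤ q ^ d := by
  classical
  have h : ((box d R).filter fun y => gi q y = v) ⊆
      Finset.Icc (fun k => (q : ℤ) * v k) (fun k => (q : ℤ) * v k + (q - 1)) := by
    intro y hy
    have h2 := (Finset.mem_filter.1 hy).2
    rw [Finset.mem_Icc, Pi.le_def, Pi.le_def, ← forall_and]
    intro k
    have h3 : y k / (q : ℤ) = v k := congrFun h2 k
    have h4 := Int.emod_add_mul_ediv (y k) q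
    have h5 := Int.emod_nonneg (y k) (show (q : ℤ) ≠ 0 by omega)
    have h6 := Int.emod_lt_of_pos (y k) (show 0 < (q : ℤ) by omega)
    rw [h3] at h4
    constructor <;> linarith
  refine (Finset.card_le_card h).trans (le_of_eq ?_)
  rw [Pi.card_Icc]
  simp only [Int.card_Icc]
  rw [Finset.prod_congr rfl (g := fun _ => q) (fun k _ => by omega)]
  simp

theorem card_image_gi_le (R q c : ℕ) (hq : 0 < q) (hc : 1 ≤ c) (hR : R = c * q) :
    ((box d R).image (gi q)).card ≤ (3 * c) ^ d := by
  classical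
  have h : (box d R).image (gi q) ⊆ box d c := by
    intro v hv
    obtain ⟨y, hy, rfl⟩ := Finset.mem_image.1 hv
    rw [mem_box] at *
    intro k
    have h1 := abs_le.1 (hy k)
    have hq' : (0 : ℤ) < q := by exact_mod_cast hq
    subst hR
    push_cast at h1
    rw [abs_le]
    constructor
    · show -(c : ℤ) ≤ y k / (q : ℤ)
      rw [Int.le_ediv_iff_mul_le hq']; linarith
    · show y k / (q : ℤ) ≤ (c : ℤ)
      exact Int.ediv_le_of_le_mul hq' h1.2
  refine (Finset.card_le_card h).trans ?_
  rw [card_box]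
  gcongr
  omega

theorem card_nearGrid_le (hd : 0 < d) (i j c R : ℕ) (hij : i + 1 ≤ j) (hc : 1 ≤ c) (hR : R = c * 2 ^ j) :
    ((nearGrid d R i j).card : ℝ) ≤ d * 15 * 5 ^ d * (R : ℝ) ^ d * 2 ^ i / 2 ^ j := by
  classical
  let A : Finset ℤ := ((Finset.Icc (-((c : ℤ) + 1)) (c + 1)) ×ˢ Finset.Icc (-(2 : ℤ) ^ i) (2 ^ i)).image
    fun p => p.1 * 2 ^ j + p.2
  let B : Finset ℤ := Finset.Icc (-((R : ℤ) + 2 ^ i)) (R + 2 ^ i)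
  have hA : A.card ≤ (5 * c) * (3 * 2 ^ i) := by
    refine Finset.card_image_le.trans ?_
    rw [Finset.card_product, Int.card_Icc, Int.card_Icc]
    have : (1 : ℕ) ≤ 2 ^ i := Nat.one_le_two_pow
    gcongr
    · omega
    · have e : (2 : ℤ) ^ i = ((2 ^ i : ℕ) : ℤ) := by push_cast; rfl
      rw [e]; omega
  have h2ij : 2 ^ i * 2 ≤ 2 ^ j := by rw [← pow_succ]; exact Nat.pow_le_pow_right (by norm_num) hij
  have hjR : 2 ^ j ≤ R := by rw [hR]; exact Nat.le_mul_of_pos_left _ hc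
  have hB : B.card ≤ 5 * R := by
    have : (1 : ℕ) ≤ 2 ^ i := Nat.one_le_two_pow
    show (Finset.Icc (-((R : ℤ) + 2 ^ i)) (R + 2 ^ i)).card ≤ _
    rw [Int.card_Icc]
    have e : (2 : ℤ) ^ i = ((2 ^ i : ℕ) : ℤ) := by push_cast; rfl
    rw [e]; omega
  have hsub : nearGrid d R i j ⊆ (Finset.univ : Finset (Fin d)).biUnion fun k =>
      Fintype.piFinset fun k' => if k' = k then A else B := by
    intro s hs
    obtain ⟨h1, k, c', h2⟩ := mem_nearGrid.1 hs
    refine Finset.mem_biUnion.2 ⟨k, Finset.mem_univ _, ?_⟩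
    rw [Fintype.mem_piFinset]
    intro k'
    split_ifs with hk
    · subst hk
      refine Finset.mem_image.2 ⟨(c', s k' - c' * 2 ^ j), ?_, by ring⟩
      rw [Finset.mem_product, Finset.mem_Icc, Finset.mem_Icc]
      refine ⟨?_, abs_le.1 h2⟩
      have h3 := abs_le.1 (h1 k')
      have h4 := abs_le.1 h2
      have h5 : (R : ℤ) = c * 2 ^ j := by exact_mod_cast hR
      have h6 : (2 : ℤ) ^ i * 2 ≤ 2 ^ j := by exact_mod_cast h2ij
      have h7 : (0 : ℤ) < 2 ^ j := by positivity
      rw [h5] at h3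
      constructor
      · by_contra hcon
        push Not at hcon
        have : c' + 1 ≤ -((c : ℤ) + 1) := hcon
        nlinarith
      · by_contra hcon
        push Not at hcon
        have : (c : ℤ) + 1 + 1 ≤ c' := hcon
        nlinarith
    · exact Finset.mem_Icc.2 (abs_le.1 (h1 k'))
  have hcard : (nearGrid d R i j).card ≤ d * ((5 * c) * (3 * 2 ^ i) * (5 * R) ^ (d - 1)) := by
    refine (Finset.card_le_card hsub).trans (Finset.card_biUnion_le.trans ?_)
    refine (Finset.sum_le_card_nsmul _ _ ((5 * c) * (3 * 2 ^ i) * (5 * R) ^ (d - 1)) fun k _ => ?_).trans (by simp)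
    rw [Fintype.card_piFinset, ← Finset.mul_prod_erase _ _ (Finset.mem_univ k)]
    simp only [if_true]
    gcongr
    refine (Finset.prod_le_pow_card _ _ (5 * R) fun k' hk' => ?_).trans (le_of_eq ?_)
    · rw [if_neg (Finset.ne_of_mem_erase hk')]; exact hB
    · rw [Finset.card_erase_of_mem (Finset.mem_univ _)]; simp
  have hcard' : ((nearGrid d R i j).card : ℝ) ≤ d * ((5 * c) * (3 * 2 ^ i) * (5 * R) ^ (d - 1)) := by
    exact_mod_cast hcard
  refine hcard'.trans ?_
  have hRr : (R : ℝ) = c * 2 ^ j := by exact_mod_cast hR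
  obtain ⟨e, rfl⟩ : ∃ e, d = e + 1 := ⟨d - 1, by omega⟩
  rw [show e + 1 - 1 = e by omega, le_div_iff₀ (by positivity)]
  have key : (5 * (c : ℝ)) * (3 * 2 ^ i) * (5 * R) ^ e * 2 ^ j = 15 * 5 ^ e * R ^ (e + 1) * 2 ^ i := by
    rw [pow_succ (R : ℝ) e, mul_pow]
    nth_rewrite 3 [hRr]
    ring
  calc _ = ((e + 1 : ℕ) : ℝ) * ((5 * (c : ℝ)) * (3 * 2 ^ i) * (5 * R) ^ e * 2 ^ j) := by ring
    _ = ((e + 1 : ℕ) : ℝ) * 15 * 5 ^ e * R ^ (e + 1) * 2 ^ i := by rw [key]; ring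
    _ ≤ _ := by
      gcongr
      · norm_num
      · omega

/-! ### crossing -/

theorem E_cross (hP : IsBernoulliHalfProduct P) (hd : 0 < d) (m i : ℕ) (s : Site d)
    (hs : s ∉ box d (rho d i + m)) :
    ∫ γ, ind (phi i γ 0 = 0 ∧ Seed γ m (s + 0)) ∂P = (1 / 2) ^ m * pp P i := by
  have hL : Loc (fun γ : Config d => ind (phi i γ 0 = 0)) := Loc.ind ((Loc_phi i 0).comp (fun z => z = 0))
  have h := E_ones hP (win m s) hL (fun x hx γ => by
    have : phi i (flip x γ) 0 = phi i γ 0 := by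
      refine phi_local i fun y hy => flip_of_ne ?_ γ
      rintro rfl
      rw [sub_zero] at hy
      have h2 := neg_mem_box.2 (win_sub_box hx)
      apply hs
      have := box_add le_rfl hy h2
      convert this using 1; abel
    simp only [this])
  rw [card_win hd] at h
  unfold pp
  rw [← h]
  simp only [ind_and, add_zero]
  rfl

theorem E_Dn (hP : IsBernoulliHalfProduct P) (hd : 0 < d) (j : ℕ) :
    ∫ γ, Dn j γ 0 ∂P ≤ ∑ i ∈ (Finset.range j).filter (fun i => lev (i + 1) < lev (j + 1)),
      (1 / 2) ^ mm d (lev (j + 1)) * (((nearGrid d (RR (lev (j + 1))) (i + 1) (j + 1)).card : ℝ) * pp P i +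
        (2 * (rho d i + mm d (lev (j + 1))) + 1) ^ d) := by
  classical
  set m := mm d (lev (j+1)) with hm
  set R := RR (lev (j+1)) with hR
  have hL : ∀ (i : ℕ) (s : Site d), Loc (fun γ : Config d => ind (phi i γ 0 = 0 ∧ Seed γ m (s + 0))) :=
    fun i s => Loc.ind (Loc.and ((Loc_phi i 0).comp (fun z => z = 0)) (Loc_seed _ _))
  unfold Dn
  rw [E_sum hP _ (fun i _ => Loc.sum _ fun s _ => hL i s)]
  refine Finset.sum_le_sum fun i _ => ?_
  rw [E_sum hP _ (fun s _ => hL i s)]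
  have hpp : 0 ≤ pp P i := integral_nonneg fun _ => ind_nonneg _
  calc ∑ s ∈ nearGrid d R (i + 1) (j + 1), ∫ γ, ind (phi i γ 0 = 0 ∧ Seed γ m (s + 0)) ∂P
      ≤ ∑ s ∈ nearGrid d R (i + 1) (j + 1), ((1 / 2) ^ m * pp P i +
        ind (s ∈ box d (rho d i + m)) * (1 / 2) ^ m) := by
        refine Finset.sum_le_sum fun s _ => ?_
        by_cases h : s ∈ box d (rho d i + m)
        · rw [ind_true h, one_mul]
          have h1 : ∫ γ, ind (phi i γ 0 = 0 ∧ Seed γ m (s + 0)) ∂P ≤ (1 / 2) ^ m := by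
            rw [← P_seed hP hd m (s + 0)]
            exact E_mono hP (hL i s) (Loc_seed m _).ind fun γ => ind_mono fun h => h.2
          have : 0 ≤ (1 / 2) ^ m * pp P i := by positivity
          linarith
        · rw [E_cross hP hd m i s h, ind_false h]; simp
    _ = (1 / 2) ^ m * (((nearGrid d R (i + 1) (j + 1)).card : ℝ) * pp P i +
          ∑ s ∈ nearGrid d R (i + 1) (j + 1), ind (s ∈ box d (rho d i + m))) := by
        rw [Finset.sum_add_distrib, Finset.sum_const, nsmul_eq_mul, ← Finset.sum_mul]; ring
    _ ≤ _ := by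
        gcongr
        rw [sum_ind_eq_card]
        have : ((nearGrid d R (i + 1) (j + 1)).filter fun x => x ∈ box d (rho d i + m)).card ≤
            (box d (rho d i + m)).card :=
          Finset.card_le_card fun x hx => (Finset.mem_filter.1 hx).2
        rw [card_box] at this
        exact_mod_cast this

end MB

namespace MB
variable {d : ℕ} {P : Measure (Config d)}

theorem poly_le (C : ℝ) (hC : 0 ≤ C) (k : ℕ) : ∃ K : ℝ, 1 ≤ K ∧ ∀ N : ℕ, (C * N) ^ k ≤ K * 2 ^ N := by
  have hl : 0 < Real.log 2 := Real.log_pos (by norm_num)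
  refine ⟨1 + (C / Real.log 2) ^ k * k.factorial, ?_, fun N => ?_⟩
  · have : 0 ≤ (C / Real.log 2) ^ k * k.factorial := by positivity
    linarith
  · have h := Real.pow_div_factorial_le_exp ((N : ℝ) * Real.log 2) (by positivity) k
    have e : Real.exp ((N : ℝ) * Real.log 2) = 2 ^ N := by
      rw [Real.exp_nat_mul, Real.exp_log (by norm_num)]
    rw [e, div_le_iff₀ (by positivity)] at h
    calc (C * N) ^ k = (C / Real.log 2) ^ k * ((N : ℝ) * Real.log 2) ^ k := by
          rw [← mul_pow]; congr 1; field_simp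
      _ ≤ (C / Real.log 2) ^ k * (2 ^ N * k.factorial) := by gcongr
      _ ≤ _ := by
        have : (0 : ℝ) < 2 ^ N := by positivity
        nlinarith

theorem pp_nonneg (i : ℕ) : 0 ≤ pp P i := integral_nonneg fun _ => ind_nonneg _

theorem pp_le_one (hP : IsBernoulliHalfProduct P) (i : ℕ) : pp P i ≤ 1 := by
  have := hP.1
  have h := E_mono hP (Loc.ind ((Loc_phi i (0 : Site d)).comp (fun z => z = 0))) (Loc.const 1)
    (fun γ => ind_le_one _)
  simpa [pp] using h

/-- `w_n` -/
def ww (n : ℕ) : ℝ := 2 ^ (2 ^ n)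

theorem one_le_ww (n : ℕ) : 1 ≤ ww n := one_le_pow₀ (by norm_num)

theorem w_eq (hd : 0 < d) (n : ℕ) : (1 / 2 : ℝ) ^ mm d n * (RR n : ℝ) ^ d = ww n := by
  have h : aa n * d = mm d n + 2 ^ n := by
    unfold aa mm
    obtain ⟨k, rfl⟩ : ∃ k, d = k + 1 := ⟨d - 1, by omega⟩
    rw [show (k + 1) * 100 - 1 = k * 100 + 99 by omega]
    ring
  unfold RR ww
  push_cast
  rw [← pow_mul, h, pow_add, ← mul_assoc, ← mul_pow]
  norm_num

theorem one_le_mm (hd : 0 < d) (n : ℕ) : 1 ≤ mm d n := by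
  unfold mm
  exact Nat.one_le_iff_ne_zero.2 (Nat.mul_ne_zero (by omega) (by positivity))

theorem mm_le (n : ℕ) : (mm d n : ℝ) ≤ 100 * d * (2 ^ n : ℕ) := by
  have : mm d n ≤ 100 * d * 2 ^ n := by unfold mm; gcongr; omega
  exact_mod_cast this

/-- first term -/
theorem T1_bound (hd : 0 < d) : ∃ K : ℝ, 1 ≤ K ∧ ∀ n J : ℕ, J ≤ aa n →
    2 ^ J * Real.exp (-((1 / 2) ^ mm d n * (RR n : ℝ) ^ d / mm d n)) ≤ K := by
  obtain ⟨K, hK, h⟩ := poly_le (100 * d) (by positivity) 101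
  have hF : (1 : ℝ) ≤ (Nat.factorial 101 : ℝ) := by exact_mod_cast Nat.factorial_pos 101
  generalize hFd : (Nat.factorial 101 : ℝ) = F at hF
  refine ⟨F * K, by nlinarith, fun n J hJ => ?_⟩
  rw [w_eq hd]
  have hm : (0 : ℝ) < mm d n := by exact_mod_cast one_le_mm hd n
  have hw := one_le_ww n
  have hw0 : 0 < ww n := by linarith
  have h1 := Real.pow_div_factorial_le_exp (ww n / mm d n) (by positivity) 101
  rw [hFd] at h1
  have h2 : (mm d n : ℝ) ^ 101 ≤ K * ww n := by
    refine le_trans ?_ (h (2 ^ n))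
    gcongr
    exact mm_le n
  have h3 : (2 : ℝ) ^ J ≤ ww n ^ 100 := by
    unfold ww
    rw [← pow_mul]
    refine pow_le_pow_right₀ (by norm_num) ?_
    unfold aa at hJ; omega
  rw [Real.exp_neg, ← div_eq_mul_inv, div_le_iff₀ (Real.exp_pos _)]
  have h4 : ww n ^ 100 / (K * F) ≤ Real.exp (ww n / mm d n) := by
    refine le_trans ?_ h1
    rw [div_pow, div_div, div_le_div_iff₀ (by positivity) (by positivity)]
    calc ww n ^ 100 * ((mm d n : ℝ) ^ 101 * F) ≤ ww n ^ 100 * ((K * ww n) * F) := by gcongr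
      _ = ww n ^ 101 * (K * F) := by ring
  rw [div_le_iff₀ (by positivity)] at h4
  linarith

/-- second term -/
theorem T2_bound (hP : IsBernoulliHalfProduct P) (hd : 2 ≤ d) (n J : ℕ) (hJ : J ≤ aa n) :
    2 ^ J * ∑ v ∈ (box d (RR n)).image (gi (2 ^ J)), ∫ γ, |Sv γ (mm d n) (RR n) (2 ^ J) v| ∂P ≤
      3 ^ d * ww n * (2 + (4 * mm d n + 1) ^ d + mm d n * ww n) := by
  have hd0 : 0 < d := by omega
  set m := mm d n with hm
  set R := RR n with hR
  obtain ⟨e, rfl⟩ : ∃ e, d = e + 1 := ⟨d - 1, by omega⟩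
  set q : ℝ := 2 ^ J with hq
  have hq0 : 0 < q := by positivity
  have hq1 : 1 ≤ q := one_le_pow₀ (by norm_num)
  set c : ℕ := 2 ^ (aa n - J) with hc
  have hRc : R = c * 2 ^ J := by rw [hc, ← pow_add, hR, RR]; congr 1; omega
  have hRc' : (R : ℝ) = c * q := by rw [hRc]; push_cast; rfl
  have hcard : (((box (e + 1) R).image (gi (2 ^ J))).card : ℝ) ≤ (3 * c) ^ (e + 1) := by
    exact_mod_cast card_image_gi_le R (2 ^ J) c (by positivity) Nat.one_le_two_pow hRc
  have hw := w_eq hd0 n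
  rw [← hm, ← hR] at hw
  set h : ℝ := (1 / 2) ^ m with hh
  have hh0 : 0 < h := by positivity
  have hqw : h * q ^ (e + 1) ≤ ww n := by
    rw [← hw]
    gcongr
    rw [hRc']
    have : (1 : ℝ) ≤ c := by exact_mod_cast (Nat.one_le_two_pow : 1 ≤ 2 ^ (aa n - J))
    nlinarith
  have hv : ∀ v : Site (e + 1), ∫ γ, |Sv γ m R (2 ^ J) v| ∂P ≤
      h * q ^ e * (2 + (4 * m + 1) ^ (e + 1) + m * ww n) := by
    intro v
    have h1 := E_Sv hP hd0 m R (2 ^ J) (one_le_mm hd0 n) v (q ^ e) (by positivity)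
      (card_fiber_le R (2 ^ J) (by positivity) v)
    push_cast at h1
    rw [← hq, ← hh, show (1 / 2 : ℝ) ^ (2 * m) = h * h by rw [hh, ← pow_add]; congr 1; ring] at h1
    refine h1.trans ?_
    have hqe : q ≤ q ^ e := le_self_pow₀ hq1 (by omega)
    have e1 : (q ^ (e + 1) * h + (4 * m + 1) ^ (e + 1) * q ^ (e + 1) * h +
        q ^ (e + 1) * q ^ (e + 1) * (m * (h * h))) / q ^ e =
        h * q * (1 + (4 * m + 1) ^ (e + 1) + m * (h * q ^ (e + 1))) := by
      field_simp
      ring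
    rw [e1]
    calc q ^ e * h + h * q * (1 + (4 * m + 1) ^ (e + 1) + m * (h * q ^ (e + 1)))
        ≤ q ^ e * h + h * q ^ e * (1 + (4 * m + 1) ^ (e + 1) + m * ww n) := by gcongr
      _ = _ := by ring
  calc q * ∑ v ∈ (box (e + 1) R).image (gi (2 ^ J)), ∫ γ, |Sv γ m R (2 ^ J) v| ∂P
      ≤ q * ((3 * c) ^ (e + 1) * (h * q ^ e * (2 + (4 * m + 1) ^ (e + 1) + m * ww n))) := by
        have hw1 := one_le_ww n
        gcongr
        refine (Finset.sum_le_card_nsmul _ _ _ fun v _ => hv v).trans ?_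
        rw [nsmul_eq_mul]
        gcongr
    _ = 3 ^ (e + 1) * (h * (c * q) ^ (e + 1)) * (2 + (4 * m + 1) ^ (e + 1) + m * ww n) := by
        rw [mul_pow, mul_pow, pow_succ q e]; ring
    _ = _ := by rw [← hRc', hw]

/-- third term -/
theorem T3_bound (hP : IsBernoulliHalfProduct P) (hd : 2 ≤ d) (j : ℕ) :
    2 ^ (j + 1) * ∫ γ, Dn j γ 0 ∂P ≤
      d * 15 * 5 ^ d * ww (lev (j + 1)) *
        (∑ i ∈ (Finset.range j).filter (fun i => lev (i + 1) < lev (j + 1)), 2 ^ (i + 1) * pp P i) +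
      aa (lev (j + 1)) * (2 * aa (lev (j + 1)) * (3 + mm d (lev (j + 1))) + 2 * mm d (lev (j + 1)) + 1) ^ d *
        ww (lev (j + 1)) := by
  have hd0 : 0 < d := by omega
  have hE := E_Dn hP hd0 j
  have hJ : j + 1 ≤ aa (lev (j + 1)) := le_aa_lev (j + 1)
  have hw := w_eq hd0 (lev (j + 1))
  set n := lev (j + 1) with hn
  set m := mm d n with hm
  set R := RR n with hR
  set h : ℝ := (1 / 2) ^ m with hh
  have hh0 : 0 < h := by positivity
  have hR0 : 0 < (R : ℝ) := by rw [hR, RR]; positivity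
  have hRc : R = 2 ^ (aa n - (j + 1)) * 2 ^ (j + 1) := by rw [← pow_add, hR, RR]; congr 1; omega
  have hw1 := one_le_ww n
  set L : ℝ := 2 * aa n * (3 + m) + 2 * m + 1 with hL
  have hL0 : 0 ≤ L := by positivity
  set I := (Finset.range j).filter (fun i => lev (i + 1) < n) with hI
  have hterm : ∀ i ∈ I, 2 ^ (j + 1) * (h * (((nearGrid d R (i + 1) (j + 1)).card : ℝ) * pp P i +
        (2 * (rho d i + m) + 1) ^ d)) ≤ d * 15 * 5 ^ d * ww n * (2 ^ (i + 1) * pp P i) + L ^ d * ww n := by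
    intro i hi
    obtain ⟨hi1, hi2⟩ := Finset.mem_filter.1 hi
    rw [Finset.mem_range] at hi1
    have hng := card_nearGrid_le hd0 (i + 1) (j + 1) (2 ^ (aa n - (j + 1))) R (by omega) Nat.one_le_two_pow hRc
    have hp := pp_nonneg (P := P) i
    have t1 : 2 ^ (j + 1) * (h * (((nearGrid d R (i + 1) (j + 1)).card : ℝ) * pp P i)) ≤
        d * 15 * 5 ^ d * ww n * (2 ^ (i + 1) * pp P i) := by
      calc 2 ^ (j + 1) * (h * (((nearGrid d R (i + 1) (j + 1)).card : ℝ) * pp P i))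
          ≤ 2 ^ (j + 1) * (h * ((d * 15 * 5 ^ d * (R : ℝ) ^ d * 2 ^ (i + 1) / 2 ^ (j + 1)) * pp P i)) := by gcongr
        _ = d * 15 * 5 ^ d * (h * R ^ d) * (2 ^ (i + 1) * pp P i) := by field_simp
        _ = _ := by rw [hw]
    have t2 : 2 ^ (j + 1) * (h * (2 * (rho d i + m) + 1) ^ d) ≤ L ^ d * ww n := by
      obtain ⟨n', hn'⟩ : ∃ n', n = n' + 1 := ⟨n - 1, by omega⟩
      have hia : i ≤ aa n' := by
        have h1 := le_aa_lev (i + 1)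
        have h2 : aa (lev (i + 1)) ≤ aa n' := aa_mono (by omega)
        omega
      have hrho := rho_le (d := d) hia
      have haa : aa n' + aa n' = aa n := by rw [hn']; unfold aa; ring
      have hmm : mm d n' ≤ m := by
        rw [hm]; unfold mm; gcongr
        · norm_num
        · omega
      have hRR : (RR n' : ℝ) * RR n' = R := by
        rw [hR, RR, RR]; push_cast; rw [← pow_add, haa]
      have hRR1 : (1 : ℝ) ≤ RR n' := by
        rw [RR]; push_cast; exact one_le_pow₀ (by norm_num)
      have hrho' : (rho d i : ℝ) ≤ aa n * (3 * RR n' + m * RR n') := by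
        have h1 : rho d i ≤ aa n * (3 * RR n' + m) := by
          refine hrho.trans ?_
          gcongr
          omega
        have h2 : (rho d i : ℝ) ≤ aa n * (3 * RR n' + m) := by exact_mod_cast h1
        refine h2.trans ?_
        gcongr
        exact le_mul_of_one_le_right (by positivity) hRR1
      have hb : (2 * (rho d i + m) + 1 : ℝ) ≤ L * RR n' := by
        have : (m : ℝ) ≤ m * RR n' := le_mul_of_one_le_right (by positivity) hRR1
        calc (2 * (rho d i + m) + 1 : ℝ) ≤ 2 * (aa n * (3 * RR n' + m * RR n') + m * RR n') + RR n' := by linarith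
          _ = L * RR n' := by rw [hL]; ring
      have hJR : (2 : ℝ) ^ (j + 1) ≤ (RR n' : ℝ) ^ d := by
        calc (2 : ℝ) ^ (j + 1) ≤ 2 ^ aa n := pow_le_pow_right₀ (by norm_num) hJ
          _ = (RR n' : ℝ) ^ 2 := by rw [sq, hRR, hR, RR]; push_cast; rfl
          _ ≤ _ := pow_le_pow_right₀ hRR1 hd
      calc 2 ^ (j + 1) * (h * (2 * (rho d i + m) + 1) ^ d) ≤ (RR n' : ℝ) ^ d * (h * (L * RR n') ^ d) := by
            gcongr
        _ = L ^ d * (h * (RR n' * RR n') ^ d) := by rw [mul_pow, mul_pow]; ring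
        _ = _ := by rw [hRR, hw]
    calc _ = 2 ^ (j + 1) * (h * (((nearGrid d R (i + 1) (j + 1)).card : ℝ) * pp P i)) +
          2 ^ (j + 1) * (h * (2 * (rho d i + m) + 1) ^ d) := by ring
      _ ≤ _ := add_le_add t1 t2
  calc 2 ^ (j + 1) * ∫ γ, Dn j γ 0 ∂P ≤ 2 ^ (j + 1) * _ := by gcongr
    _ = ∑ i ∈ I, _ := Finset.mul_sum _ _ _
    _ ≤ ∑ i ∈ I, (d * 15 * 5 ^ d * ww n * (2 ^ (i + 1) * pp P i) + L ^ d * ww n) := Finset.sum_le_sum hterm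
    _ = d * 15 * 5 ^ d * ww n * (∑ i ∈ I, 2 ^ (i + 1) * pp P i) + I.card * L ^ d * ww n := by
        rw [Finset.sum_add_distrib, Finset.mul_sum, Finset.sum_const, nsmul_eq_mul]; ring
    _ ≤ _ := by
        have hIc : (I.card : ℝ) ≤ aa n := by
          have h1 : I.card ≤ j := (Finset.card_filter_le _ _).trans (by simp)
          have : I.card ≤ aa n := by omega
          exact_mod_cast this
        gcongr

set_option maxHeartbeats 1000000 in
theorem recursion (hP : IsBernoulliHalfProduct P) (hd : 2 ≤ d) : ∃ K : ℝ, 1 ≤ K ∧ ∀ j : ℕ,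
    2 ^ (j + 1) * pp P (j + 1) ≤ K * ww (lev (j + 1)) ^ 3 *
      (1 + ∑ i ∈ (Finset.range j).filter (fun i => lev (i + 1) < lev (j + 1)), 2 ^ (i + 1) * pp P i) := by
  have hd0 : 0 < d := by omega
  obtain ⟨K1, hK1, h1⟩ := T1_bound hd0
  obtain ⟨K2, hK2, h2⟩ := poly_le (401 * d) (by positivity) d
  obtain ⟨K3, hK3, h3⟩ := poly_le (100 * d) (by positivity) 1
  obtain ⟨K4, hK4, h4⟩ := poly_le (20801 * d) (by positivity) (2 * d + 1)
  refine ⟨K1 + 3 ^ d * (2 + K2 + K3) + d * 15 * 5 ^ d + K4, ?_, fun j => ?_⟩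
  · have : (0 : ℝ) ≤ 3 ^ d * (2 + K2 + K3) := by positivity
    have : (0 : ℝ) ≤ d * 15 * 5 ^ d := by positivity
    linarith
  have hM := main_ineq hP j
  have hJ : j + 1 ≤ aa (lev (j + 1)) := le_aa_lev (j + 1)
  have hT1 := h1 (lev (j + 1)) (j + 1) hJ
  have hT0 := P_noowner hP hd0 (mm d (lev (j + 1))) (RR (lev (j + 1))) (one_le_mm hd0 _)
  have hT2 := T2_bound hP hd (lev (j + 1)) (j + 1) hJ
  have hT3 := T3_bound hP hd j
  set n := lev (j + 1) with hn
  have hw := one_le_ww n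
  set w := ww n with hwd
  set S := ∑ i ∈ (Finset.range j).filter (fun i => lev (i + 1) < n), 2 ^ (i + 1) * pp P i with hS
  have hS0 : 0 ≤ S := Finset.sum_nonneg fun i _ => mul_nonneg (by positivity) (pp_nonneg i)
  have hN : (1 : ℝ) ≤ (2 ^ n : ℕ) := by exact_mod_cast Nat.one_le_two_pow
  have hd1 : (1 : ℝ) ≤ d := by exact_mod_cast hd0
  have hmN := mm_le (d := d) n
  have haN : (aa n : ℝ) = 100 * (2 ^ n : ℕ) := by unfold aa; push_cast; ring
  have e2 := h2 (2 ^ n)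
  have e3 := h3 (2 ^ n)
  have e4 := h4 (2 ^ n)
  change _ ≤ K2 * w at e2
  change _ ≤ K3 * w at e3
  change _ ≤ K4 * w at e4
  set N : ℝ := ((2 ^ n : ℕ) : ℝ) with hNd
  set m : ℝ := (mm d n : ℝ) with hmd
  have hm0 : 0 ≤ m := by positivity
  have hdN : 1 ≤ d * N := by nlinarith
  have f2 : (4 * m + 1) ^ d ≤ K2 * w := by
    refine le_trans ?_ e2
    gcongr
    linarith
  have f3 : m ≤ K3 * w := by rw [pow_one] at e3; linarith
  have f4 : aa n * (2 * aa n * (3 + m) + 2 * m + 1) ^ d ≤ K4 * w := by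
    refine le_trans ?_ e4
    have g1 : 2 * aa n * (3 + m) + 2 * m + 1 ≤ (20801 * d * N) * N := by
      rw [haN]
      nlinarith [mul_le_mul_of_nonneg_left hmN (by linarith : (0:ℝ) ≤ N), mul_le_mul_of_nonneg_right hd1 (by linarith : (0:ℝ) ≤ N), mul_le_mul_of_nonneg_left hN (by positivity : (0:ℝ) ≤ d * N)]
    have g2 : (aa n : ℝ) ≤ 20801 * d * N := by rw [haN]; nlinarith
    have g3 : N ≤ 20801 * d * N := by nlinarith
    have hN0 : 0 ≤ N := by linarith
    calc aa n * (2 * aa n * (3 + m) + 2 * m + 1) ^ d ≤ (20801 * d * N) * ((20801 * d * N) * (20801 * d * N)) ^ d := by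
          gcongr
          exact g1.trans (by gcongr)
      _ = _ := by rw [← sq, ← pow_mul, pow_succ]; ring
  have hw0 : 0 ≤ w := by linarith
  have w2 : w ≤ w ^ 2 := le_self_pow₀ hw (by norm_num)
  have w3 : w ^ 2 ≤ w ^ 3 := pow_le_pow_right₀ hw (by norm_num)
  have w13 : 1 ≤ w ^ 3 := one_le_pow₀ hw
  have k1 : 2 ^ (j + 1) * pp P (j + 1) ≤ K1 + 3 ^ d * w * (2 + K2 * w + (K3 * w) * w) +
      (d * 15 * 5 ^ d * w * S + K4 * w * w) := by
    have q0 : (0 : ℝ) < 2 ^ (j + 1) := by positivity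
    have t := mul_le_mul_of_nonneg_left hM q0.le
    rw [mul_add, mul_add] at t
    refine t.trans (add_le_add (add_le_add ((mul_le_mul_of_nonneg_left hT0 q0.le).trans hT1) (hT2.trans ?_))
      (hT3.trans ?_))
    · refine mul_le_mul_of_nonneg_left ?_ (by positivity)
      exact add_le_add (add_le_add le_rfl f2) (mul_le_mul_of_nonneg_right f3 hw0)
    · exact add_le_add le_rfl (mul_le_mul_of_nonneg_right f4 hw0)
  refine k1.trans ?_
  have m1 : K1 ≤ K1 * w ^ 3 := le_mul_of_one_le_right (by linarith) w13
  have m2 : 3 ^ d * w * (2 + K2 * w + (K3 * w) * w) ≤ 3 ^ d * (2 + K2 + K3) * w ^ 3 := by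
    calc 3 ^ d * w * (2 + K2 * w + (K3 * w) * w) = 3 ^ d * (2 * w + K2 * w ^ 2 + K3 * w ^ 3) := by ring
      _ ≤ 3 ^ d * (2 * w ^ 3 + K2 * w ^ 3 + K3 * w ^ 3) := by gcongr; linarith
      _ = _ := by ring
  have m3 : d * 15 * 5 ^ d * w * S ≤ d * 15 * 5 ^ d * w ^ 3 * S := by gcongr; linarith
  have m4 : K4 * w * w ≤ K4 * w ^ 3 := by
    rw [mul_assoc, ← sq]; gcongr
  have m5 : 0 ≤ (K1 + 3 ^ d * (2 + K2 + K3) + K4) * w ^ 3 * S := by positivity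
  have m6 : 0 ≤ d * 15 * 5 ^ d * w ^ 3 := by positivity
  linarith

end MB

namespace MB
variable {d : ℕ} {P : Measure (Config d)}

theorem ww_succ (n : ℕ) : ww (n + 1) = ww n ^ 2 := by
  unfold ww; rw [← pow_mul, pow_succ]

theorem ww_mono {n n' : ℕ} (h : n ≤ n') : ww n ≤ ww n' :=
  pow_le_pow_right₀ (by norm_num) (Nat.pow_le_pow_right (by norm_num) h)

theorem le_ww (n : ℕ) : (n : ℝ) ≤ ww n := by
  have h1 : n < 2 ^ n := Nat.lt_two_pow_self
  have h2 : 2 ^ n < 2 ^ (2 ^ n) := Nat.lt_two_pow_self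
  have h : n ≤ 2 ^ (2 ^ n) := by omega
  unfold ww
  exact_mod_cast h

theorem solve (hP : IsBernoulliHalfProduct P) (hd : 2 ≤ d) : ∃ C : ℝ, 1 ≤ C ∧ ∀ j : ℕ,
    2 ^ j * pp P j ≤ C * ww (lev j) ^ 10 := by
  obtain ⟨K, hK, hrec⟩ := recursion hP hd
  obtain ⟨K5, hK5, h5⟩ := poly_le 201 (by norm_num) 1
  obtain ⟨n0, hn0⟩ := exists_nat_ge (K * K5)
  set C : ℝ := 2 ^ aa n0 with hC
  have hC1 : 1 ≤ C := one_le_pow₀ (by norm_num)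
  refine ⟨C, hC1, fun j => ?_⟩
  induction j using Nat.strong_induction_on with
  | _ j ih =>
  have hw := one_le_ww (lev j)
  have hw10 : 1 ≤ ww (lev j) ^ 10 := one_le_pow₀ hw
  by_cases hn : lev j ≤ n0
  · have h1 : (2 : ℝ) ^ j ≤ C :=
      pow_le_pow_right₀ (by norm_num) ((le_aa_lev j).trans (aa_mono hn))
    have h2 := pp_le_one hP j
    have h3 := pp_nonneg (P := P) j
    calc (2 : ℝ) ^ j * pp P j ≤ C * 1 := by gcongr
      _ ≤ _ := by gcongr
  · push Not at hn
    obtain ⟨j, rfl⟩ : ∃ j', j = j' + 1 := by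
      refine ⟨j - 1, ?_⟩
      rcases Nat.eq_zero_or_pos j with h | h
      · subst h
        have : lev 0 ≤ 0 := lev_le (by omega)
        omega
      · omega
    have hr := hrec j
    have hJ := le_aa_lev (j + 1)
    set n := lev (j + 1) with hnd
    obtain ⟨n', hn'⟩ : ∃ n', n = n' + 1 := ⟨n - 1, by omega⟩
    have hw' : ww n = ww n' ^ 2 := by rw [hn', ww_succ]
    have hKw : K * K5 ≤ ww n := hn0.trans ((le_ww n0).trans (ww_mono hn.le))
    have h5n := h5 (2 ^ n)
    rw [pow_one] at h5n
    change _ ≤ K5 * ww n at h5n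
    set w := ww n with hwd
    have hN : (1 : ℝ) ≤ (2 ^ n : ℕ) := by exact_mod_cast Nat.one_le_two_pow
    set N : ℝ := ((2 ^ n : ℕ) : ℝ) with hNd
    have hw0 : 0 < w := by linarith
    have hS : ∑ i ∈ (Finset.range j).filter (fun i => lev (i + 1) < n), 2 ^ (i + 1) * pp P i ≤
        200 * N * (C * w ^ 5) := by
      have hterm : ∀ i ∈ (Finset.range j).filter (fun i => lev (i + 1) < n), 2 ^ (i + 1) * pp P i ≤
          2 * (C * w ^ 5) := by
        intro i hi
        obtain ⟨h1, h2⟩ := Finset.mem_filter.1 hi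
        rw [Finset.mem_range] at h1
        have h3 := ih i (by omega)
        have h4 : lev i ≤ n' := by
          have := lev_mono (show i ≤ i + 1 by omega)
          omega
        have h6 : ww (lev i) ^ 10 ≤ w ^ 5 := by
          rw [hw', ← pow_mul]
          have := one_le_ww (lev i)
          exact pow_le_pow_left₀ (by linarith) (ww_mono h4) 10
        have h7 : C * ww (lev i) ^ 10 ≤ C * w ^ 5 := by gcongr
        rw [pow_succ]
        linarith
      refine (Finset.sum_le_card_nsmul _ _ _ hterm).trans ?_
      rw [nsmul_eq_mul]
      have hc : (((Finset.range j).filter (fun i => lev (i + 1) < n)).card : ℝ) ≤ 100 * N := by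
        have h1 : ((Finset.range j).filter (fun i => lev (i + 1) < n)).card ≤ j :=
          (Finset.card_filter_le _ _).trans (by simp)
        have h2 : ((Finset.range j).filter (fun i => lev (i + 1) < n)).card ≤ 100 * 2 ^ n := by
          unfold aa at hJ; omega
        have : (((Finset.range j).filter (fun i => lev (i + 1) < n)).card : ℝ) ≤ ((100 * 2 ^ n : ℕ) : ℝ) := by
          exact_mod_cast h2
        rw [Nat.cast_mul] at this
        exact this
      calc _ ≤ 100 * N * (2 * (C * w ^ 5)) := by gcongr
        _ = _ := by ring
    have hCw : 1 ≤ C * w ^ 5 := one_le_mul_of_one_le_of_one_le hC1 (one_le_pow₀ hw)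
    have h8 : 1 + 200 * N * (C * w ^ 5) ≤ 201 * N * (C * w ^ 5) := by
      have : 1 ≤ N * (C * w ^ 5) := one_le_mul_of_one_le_of_one_le hN hCw
      linarith
    calc 2 ^ (j + 1) * pp P (j + 1) ≤ K * w ^ 3 * (1 + _) := hr
      _ ≤ K * w ^ 3 * (201 * N * (C * w ^ 5)) := by gcongr; linarith
      _ ≤ K * w ^ 3 * (K5 * w * (C * w ^ 5)) := by gcongr
      _ = (K * K5) * (C * w ^ 9) := by ring
      _ ≤ w * (C * w ^ 9) := by gcongr
      _ = _ := by ring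

theorem decay (hP : IsBernoulliHalfProduct P) (hd : 2 ≤ d) : ∃ C : ℝ, 0 < C ∧ ∀ j : ℕ,
    pp P j ≤ C * ((2 : ℝ) ^ (-(4 / 5) : ℝ)) ^ j := by
  obtain ⟨C, hC, h⟩ := solve hP hd
  refine ⟨C * 2 ^ 10, by positivity, fun j => ?_⟩
  have hj := h j
  have hw : ww (lev j) ^ 10 ≤ 2 ^ 10 * ((2 : ℝ) ^ (1 / 5 : ℝ)) ^ j := by
    have h1 : (1 : ℝ) ≤ (2 : ℝ) ^ (1 / 5 : ℝ) := Real.one_le_rpow (by norm_num) (by norm_num)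
    have h2 : (1 : ℝ) ≤ ((2 : ℝ) ^ (1 / 5 : ℝ)) ^ j := one_le_pow₀ h1
    rcases Nat.eq_zero_or_pos (lev j) with h0 | h0
    · rw [h0]
      unfold ww
      norm_num at h2 ⊢
      linarith
    · obtain ⟨n', hn'⟩ : ∃ n', lev j = n' + 1 := ⟨lev j - 1, by omega⟩
      have h3 : aa n' < j := aa_lt_of_lt_lev (by omega)
      have h4 : ww (lev j) ^ 10 ≤ ((2 : ℝ) ^ (1 / 5 : ℝ)) ^ j := by
        have e : ww (lev j) ^ 10 = ((2 : ℝ) ^ (1 / 5 : ℝ)) ^ aa n' := by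
          rw [hn']; unfold ww aa
          rw [← Real.rpow_natCast, ← Real.rpow_natCast, ← Real.rpow_natCast, ← Real.rpow_mul (by norm_num),
            ← Real.rpow_mul (by norm_num)]
          congr 1
          push_cast
          ring
        rw [e]
        exact pow_le_pow_right₀ h1 h3.le
      refine h4.trans ?_
      norm_num at h2 ⊢
      linarith
  have e1 : ((2 : ℝ) ^ (1 / 5 : ℝ)) ^ j = 2 ^ j * ((2 : ℝ) ^ (-(4 / 5) : ℝ)) ^ j := by
    rw [← mul_pow]
    congr 1
    have : (2 : ℝ) * (2 : ℝ) ^ (-(4 / 5) : ℝ) = (2 : ℝ) ^ (1 : ℝ) * (2 : ℝ) ^ (-(4 / 5) : ℝ) := by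
      rw [Real.rpow_one]
    rw [this, ← Real.rpow_add (by norm_num)]
    norm_num
  have h2 : (2 : ℝ) ^ j * pp P j ≤ 2 ^ j * (C * 2 ^ 10 * ((2 : ℝ) ^ (-(4 / 5) : ℝ)) ^ j) := by
    refine hj.trans ?_
    calc C * ww (lev j) ^ 10 ≤ C * (2 ^ 10 * ((2 : ℝ) ^ (1 / 5 : ℝ)) ^ j) := by gcongr
      _ = _ := by rw [e1]; ring
  exact le_of_mul_le_mul_left h2 (by positivity)

/-! ### the final matching -/

open Classical in
def Phi (γ : Config d) (x : Site d) : Site d :=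
  if h : ∃ j, phi j γ x ≠ x then phi (Nat.find h) γ x else x

theorem Phi_of_ne {γ : Config d} {x : Site d} {j : ℕ} (h : phi j γ x ≠ x) : Phi γ x = phi j γ x := by
  classical
  have hex : ∃ j, phi j γ x ≠ x := ⟨j, h⟩
  unfold Phi
  rw [dif_pos hex]
  exact (phi_stable (Nat.find_min' hex h) (Nat.find_spec hex)).symm

theorem Phi_of_not {γ : Config d} {x : Site d} (h : ∀ j, phi j γ x = x) : Phi γ x = x := by
  unfold Phi
  rw [dif_neg]
  push Not; exact h

theorem Phi_shift (γ : Config d) (z x : Site d) : Phi (shiftCfg z γ) (x + z) = Phi γ x + z := by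
  by_cases h : ∃ j, phi j γ x ≠ x
  · obtain ⟨j, hj⟩ := h
    have h2 : phi j (shiftCfg z γ) (x + z) ≠ x + z := fun h => hj ((phi_fix_shift j γ z x).1 h)
    rw [Phi_of_ne hj, Phi_of_ne h2, phi_shift]
  · push Not at h
    rw [Phi_of_not h, Phi_of_not fun j => (phi_fix_shift j γ z x).2 (h j)]

theorem Phi_measurable (x : Site d) : Measurable (fun γ : Config d => Phi γ x) := by
  refine measurable_to_countable' fun y => ?_
  have hm : ∀ j y, MeasurableSet {γ : Config d | phi j γ x = y} := fun j y =>
    (Loc_phi j x).measurable (measurableSet_singleton y)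
  by_cases hy : y = x
  · have : (fun γ : Config d => Phi γ x) ⁻¹' {y} = ⋂ j, {γ : Config d | phi j γ x = x} := by
      ext γ
      simp only [Set.mem_preimage, Set.mem_singleton_iff, Set.mem_iInter, Set.mem_ofPred_eq]
      constructor
      · intro h j
        by_contra hne
        rw [Phi_of_ne hne, hy] at h
        exact hne h
      · intro h; rw [Phi_of_not h, hy]
    rw [this]
    exact MeasurableSet.iInter fun j => hm j x
  · have : (fun γ : Config d => Phi γ x) ⁻¹' {y} = ⋃ j, {γ : Config d | phi j γ x = y} := by
      ext γ
      simp only [Set.mem_preimage, Set.mem_singleton_iff, Set.mem_iUnion, Set.mem_ofPred_eq]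
      constructor
      · intro h
        by_contra hcon
        push Not at hcon
        by_cases h2 : ∃ j, phi j γ x ≠ x
        · obtain ⟨j, hj⟩ := h2
          rw [Phi_of_ne hj] at h
          exact hcon j h
        · push Not at h2
          rw [Phi_of_not h2] at h
          exact hy h.symm
      · rintro ⟨j, hj⟩
        rw [Phi_of_ne (j := j) (by rw [hj]; exact hy), hj]
    rw [this]
    exact MeasurableSet.iUnion fun j => hm j y

theorem ae_matched (hP : IsBernoulliHalfProduct P) (hd : 2 ≤ d) :
    ∀ᵐ γ ∂P, ∀ x : Site d, ∃ j, phi j γ x ≠ x := by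
  have := hP.1
  obtain ⟨C, hC, h⟩ := decay hP hd
  rw [ae_all_iff]
  intro x
  have hL : ∀ j, Loc (fun γ : Config d => phi j γ x = x) := fun j => (Loc_phi j x).comp (fun z => z = x)
  have hm : ∀ j, MeasurableSet {γ : Config d | phi j γ x = x} := fun j =>
    (Loc_phi j x).measurable (measurableSet_singleton x)
  have hpx : ∀ j, P.real {γ : Config d | phi j γ x = x} = pp P j := by
    intro j
    unfold pp
    have e := E_shift hP x (hL j).ind
    have e2 : ∀ γ : Config d, (phi j (shiftCfg x γ) x = x) ↔ phi j γ 0 = 0 := by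
      intro γ
      have := phi_fix_shift j γ x 0
      rwa [zero_add] at this
    simp only [e2] at e
    rw [e, ← integral_indicator_one (hm j)]
    refine integral_congr_ae (Filter.Eventually.of_forall fun γ => ?_)
    simp only [ind, Set.indicator_apply, Set.mem_ofPred_eq, Pi.one_apply]
    congr
  have hr1 : (2 : ℝ) ^ (-(4 / 5) : ℝ) < 1 := Real.rpow_lt_one_of_one_lt_of_neg (by norm_num) (by norm_num)
  have ht : Filter.Tendsto (fun j : ℕ => C * ((2 : ℝ) ^ (-(4 / 5) : ℝ)) ^ j) Filter.atTop (nhds 0) := by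
    have := (tendsto_pow_atTop_nhds_zero_of_lt_one (by positivity) hr1).const_mul C
    simpa using this
  have h0 : P.real {γ : Config d | ∀ j, phi j γ x = x} ≤ 0 := by
    refine ge_of_tendsto' ht fun j => le_trans ?_ ((hpx j).le.trans (h j))
    exact measureReal_mono fun γ hγ => hγ j
  rw [ae_iff]
  have h1 : P.real {γ : Config d | ∀ j, phi j γ x = x} = 0 := le_antisymm h0 measureReal_nonneg
  have h2 := (measureReal_eq_zero_iff).1 h1
  convert h2 using 2
  ext γ
  simp

theorem final (hd : 2 ≤ d) (ε : ℝ) (hε : 0 < ε) (hP : IsBernoulliHalfProduct P) :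
    ∃ Φ : Config d → Site d → Site d, IsMatchingRule P Φ ∧ IsEquivariant P Φ ∧
      ∫⁻ γ, ENNReal.ofReal (ZΦ Φ γ ^ (2 / 3 - ε)) ∂P < ⊤ := by
  have := hP.1
  have hae := ae_matched hP hd
  obtain ⟨C, hC, hdec⟩ := decay hP hd
  refine ⟨Phi, ⟨Phi_measurable, ?_⟩, fun z x => Filter.Eventually.of_forall fun γ => Phi_shift γ z x, ?_⟩
  · filter_upwards [hae] with γ hγ
    have hinv : ∀ x, Phi γ (Phi γ x) = x := by
      intro x
      obtain ⟨j, hj⟩ := hγ x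
      rw [Phi_of_ne hj]
      have h2 := (phi_good j γ).inv x
      rw [Phi_of_ne (j := j) (by rw [h2]; exact hj.symm), h2]
    refine ⟨Function.Involutive.bijective hinv, hinv, fun x => ?_⟩
    obtain ⟨j, hj⟩ := hγ x
    rw [Phi_of_ne hj]
    exact (phi_good j γ).col x hj
  · set r : ℝ := (2 : ℝ) ^ (2 / 3 : ℝ) with hr
    have hr0 : 0 < r := by positivity
    have hL : ∀ j, Loc (fun γ : Config d => r ^ (j + 1) * ind (phi j γ 0 = 0)) := fun j =>
      (Loc.const (r ^ (j + 1))).mul (Loc.ind ((Loc_phi j 0).comp (fun z => z = 0)))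
    have hpt : ∀ᵐ γ ∂P, ENNReal.ofReal (ZΦ Phi γ ^ (2 / 3 - ε)) ≤
        ∑' j : ℕ, ENNReal.ofReal (r ^ (j + 1) * ind (phi j γ 0 = 0)) := by
      filter_upwards [hae] with γ hγ
      obtain ⟨j, hj⟩ := hγ 0
      obtain ⟨i, hi, h1, h2⟩ := phi_first hj
      refine le_trans ?_ (ENNReal.le_tsum i)
      rw [ind_true h1, mul_one]
      apply ENNReal.ofReal_le_ofReal
      unfold ZΦ
      rw [Phi_of_ne hj]
      have hz1 : (1 : ℝ) ≤ ‖phi j γ 0‖ := by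
        obtain ⟨k, hk⟩ : ∃ k, phi j γ 0 k ≠ 0 := by
          by_contra hcon
          push Not at hcon
          exact hj (funext hcon)
        refine le_trans ?_ (norm_le_pi_norm (phi j γ 0) k)
        rw [Int.norm_eq_abs]
        exact_mod_cast Int.one_le_abs hk
      have hz2 : ‖phi j γ 0‖ ≤ 2 ^ (i + 1) := by
        rw [pi_norm_le_iff_of_nonneg (by positivity)]
        intro k
        have := SameCell.dist (by positivity) h2 k
        rw [Pi.zero_apply, sub_zero] at this
        rw [Int.norm_eq_abs]
        exact_mod_cast this.le
      calc ‖phi j γ 0‖ ^ (2 / 3 - ε) ≤ ‖phi j γ 0‖ ^ (2 / 3 : ℝ) :=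
            Real.rpow_le_rpow_of_exponent_le hz1 (by linarith)
        _ ≤ ((2 : ℝ) ^ (i + 1)) ^ (2 / 3 : ℝ) := by gcongr
        _ = r ^ (i + 1) := by
            rw [hr, ← Real.rpow_natCast, ← Real.rpow_natCast, ← Real.rpow_mul (by norm_num),
              ← Real.rpow_mul (by norm_num), mul_comm]
    refine (lintegral_mono_ae hpt).trans_lt ?_
    rw [lintegral_tsum fun j => (hL j).measurable.ennreal_ofReal.aemeasurable]
    have hE : ∀ j, ∫⁻ γ, ENNReal.ofReal (r ^ (j + 1) * ind (phi j γ 0 = 0)) ∂P =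
        ENNReal.ofReal (r ^ (j + 1) * pp P j) := by
      intro j
      rw [← ofReal_integral_eq_lintegral_ofReal (hL j).integrable
        (Filter.Eventually.of_forall fun γ => mul_nonneg (by positivity) (ind_nonneg _)), integral_const_mul]
      rfl
    simp only [hE]
    have hs : Summable fun j : ℕ => r ^ (j + 1) * pp P j := by
      set b : ℝ := (2 : ℝ) ^ (-(4 / 5) : ℝ) with hb
      have hrb : r * b < 1 := by
        rw [hr, hb, ← Real.rpow_add (by norm_num)]
        exact Real.rpow_lt_one_of_one_lt_of_neg (by norm_num) (by norm_num)
      have hb0 : 0 < b := by positivity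
      refine Summable.of_nonneg_of_le (fun j => mul_nonneg (by positivity) (pp_nonneg j)) (fun j => ?_)
        ((summable_geometric_of_lt_one (by positivity) hrb).mul_left (C * r))
      calc r ^ (j + 1) * pp P j ≤ r ^ (j + 1) * (C * b ^ j) := by gcongr; exact hdec j
        _ = _ := by rw [mul_pow]; ring
    rw [← ENNReal.ofReal_tsum_of_nonneg (fun j => mul_nonneg (by positivity) (pp_nonneg j)) hs]
    exact ENNReal.ofReal_lt_top

end MB

/-- For every `d ≥ 2` and `ε > 0` there exists a translation-equivariant matching rule `Φ`
with `E[Z_Φ^{2/3 - ε}] < ∞`. -/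
theorem statement1 (d : ℕ) (hd : 2 ≤ d) (ε : ℝ) (hε : 0 < ε)
    (P : Measure (Config d)) (hP : IsBernoulliHalfProduct P) :
    ∃ Φ : Config d → Site d → Site d,
      IsMatchingRule P Φ ∧ IsEquivariant P Φ ∧
        ∫⁻ γ, ENNReal.ofReal (ZΦ Φ γ ^ (2 / 3 - ε)) ∂P < ⊤ := by
  exact MB.final hd ε hε hP

end
end

section
/- For every integer d ≥ 1 there exist a constant c = c(d) < ∞ and a translation-equivariant matching rule Φ such that for all r > 0, ℙ(Z_Φ > r) ≤ c r^{−1/2}. -/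
open MeasureTheory ENNReal

noncomputable section

/-! ### Random walk kernel -/

def pker : ℕ → ℤ → ℝ
  | 0, j => if j = 0 then 1 else 0
  | N + 1, j => (pker N (j - 1) + pker N (j + 1)) / 2

lemma pker_nonneg (N : ℕ) (j : ℤ) : 0 ≤ pker N j := by
  induction N generalizing j with
  | zero => simp only [pker]; split_ifs <;> norm_num
  | succ N ih => simp only [pker]; have := ih (j - 1); have := ih (j + 1); positivity

lemma pker_eq_zero (N : ℕ) (j : ℤ) (h : j < -(N : ℤ)) : pker N j = 0 := by
  induction N generalizing j with
  | zero => simp only [pker]; rw [if_neg]; push_cast at h; omega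
  | succ N ih =>
    simp only [pker]
    push_cast at h
    rw [ih (j - 1) (by omega), ih (j + 1) (by omega)]; norm_num

lemma pker_odd (N : ℕ) (i : ℤ) : pker N (2 * i + 1 - N) = 0 := by
  induction N generalizing i with
  | zero => simp only [pker]; rw [if_neg]; push_cast; omega
  | succ N ih =>
    simp only [pker]
    push_cast
    have h1 := ih (i - 1)
    have h2 := ih i
    rw [show 2 * i + 1 - ((N : ℤ) + 1) - 1 = 2 * (i - 1) + 1 - N by ring,
      show 2 * i + 1 - ((N : ℤ) + 1) + 1 = 2 * i + 1 - N by ring, h1, h2]; norm_num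

lemma pker_even (N i : ℕ) : pker N (2 * i - N) = (N.choose i : ℝ) / 2 ^ N := by
  induction N generalizing i with
  | zero =>
    simp only [pker]
    rcases i with _ | i
    · simp
    · rw [if_neg (by push_cast; omega)]; simp
  | succ N ih =>
    simp only [pker]
    rcases i with _ | i
    · have h2 := ih 0
      rw [pker_eq_zero N _ (by push_cast; omega),
        show 2 * ((0 : ℕ) : ℤ) - ((N + 1 : ℕ) : ℤ) + 1 = 2 * ((0 : ℕ) : ℤ) - N by push_cast; ring, h2]
      simp [pow_succ]; field_simp
    · have h1 := ih i
      have h2 := ih (i + 1)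
      rw [show 2 * ((i + 1 : ℕ) : ℤ) - ((N + 1 : ℕ) : ℤ) - 1 = 2 * (i : ℤ) - N by push_cast; ring,
        show 2 * ((i + 1 : ℕ) : ℤ) - ((N + 1 : ℕ) : ℤ) + 1 = 2 * ((i + 1 : ℕ) : ℤ) - N by
          push_cast; ring, h1, h2, Nat.choose_succ_succ]
      push_cast
      rw [pow_succ]; field_simp

def wsurv (N k : ℕ) : ℝ := ∑ i ∈ Finset.range k, (pker N ((i : ℤ) + 1) + pker N (-(i : ℤ)))

lemma wsurv_nonneg (N k : ℕ) : 0 ≤ wsurv N k :=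
  Finset.sum_nonneg fun i _ => add_nonneg (pker_nonneg _ _) (pker_nonneg _ _)

lemma wsurv_zero_succ (k : ℕ) : wsurv 0 (k + 1) = 1 := by
  unfold wsurv
  rw [Finset.sum_range_succ', Finset.sum_eq_zero]
  · simp [pker]
  · intro i _
    simp only [pker]
    rw [if_neg (by omega), if_neg (by push_cast; omega)]; norm_num

lemma wsurv_succ (N k : ℕ) : wsurv (N + 1) (k + 1) = (wsurv N k + wsurv N (k + 2)) / 2 := by
  induction k with
  | zero =>
    simp [wsurv, Finset.sum_range_succ, pker]
    norm_num
    ring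
  | succ k ih =>
    have e1 : wsurv (N + 1) (k + 1 + 1) = wsurv (N + 1) (k + 1) +
        (pker (N + 1) (((k + 1 : ℕ) : ℤ) + 1) + pker (N + 1) (-((k + 1 : ℕ) : ℤ))) :=
      Finset.sum_range_succ _ _
    have e2 : wsurv N (k + 1) = wsurv N k + (pker N ((k : ℤ) + 1) + pker N (-(k : ℤ))) :=
      Finset.sum_range_succ _ _
    have e3 : wsurv N (k + 1 + 2) = wsurv N (k + 2) +
        (pker N (((k + 2 : ℕ) : ℤ) + 1) + pker N (-((k + 2 : ℕ) : ℤ))) :=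
      Finset.sum_range_succ _ _
    rw [e1, e2, e3, ih]
    simp only [pker]
    push_cast
    rw [show (k : ℤ) + 1 + 1 - 1 = k + 1 by ring, show (k : ℤ) + 1 + 1 + 1 = k + 2 + 1 by ring,
      show -((k : ℤ) + 1) - 1 = -(k + 2) by ring, show -((k : ℤ) + 1) + 1 = -k by ring]
    ring

lemma centralBinom_bound (m : ℕ) : (m.centralBinom : ℝ) ^ 2 * (2 * m + 1) ≤ 16 ^ m := by
  induction m with
  | zero => simp
  | succ m ih =>
    have h := Nat.succ_mul_centralBinom_succ m
    have h' : ((m : ℝ) + 1) * (m + 1).centralBinom = 2 * (2 * m + 1) * m.centralBinom := by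
      exact_mod_cast h
    have hp : (0 : ℝ) < ((m : ℝ) + 1) ^ 2 := by positivity
    refine le_of_mul_le_mul_left ?_ hp
    push_cast
    calc ((m : ℝ) + 1) ^ 2 * (((m + 1).centralBinom : ℝ) ^ 2 * (2 * (m + 1) + 1))
        = (((m : ℝ) + 1) * (m + 1).centralBinom) ^ 2 * (2 * m + 3) := by ring
      _ = (m.centralBinom : ℝ) ^ 2 * (2 * m + 1) * (4 * ((2 * m + 1) * (2 * m + 3))) := by
          rw [h']; ring
      _ ≤ 16 ^ m * (4 * (4 * ((m : ℝ) + 1) ^ 2)) := by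
          refine mul_le_mul ih ?_ (by positivity) (by positivity)
          nlinarith
      _ = _ := by ring

lemma wsurv_bound (m : ℕ) : wsurv (2 * m) 1 ≤ 1 / √(2 * m + 1) := by
  have h0 : wsurv (2 * m) 1 = (m.centralBinom : ℝ) / 4 ^ m := by
    have a := pker_odd (2 * m) m
    have b := pker_even (2 * m) m
    rw [show 2 * (m : ℤ) + 1 - ((2 * m : ℕ) : ℤ) = 1 by push_cast; ring] at a
    rw [show 2 * (m : ℤ) - ((2 * m : ℕ) : ℤ) = 0 by push_cast; ring] at b
    simp only [wsurv, Finset.sum_range_one, Nat.cast_zero, zero_add, neg_zero, a, b]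
    rw [Nat.centralBinom_eq_two_mul_choose, pow_mul]; norm_num
  rw [h0, div_le_div_iff₀ (by positivity) (by positivity), one_mul]
  have h := centralBinom_bound m
  refine le_of_sq_le_sq ?_ (by positivity)
  rw [mul_pow, Real.sq_sqrt (by positivity), ← pow_mul, mul_comm m 2, pow_mul]
  norm_num
  exact h

/-! ### The probability estimate -/

def stp (ε b : Bool) : ℤ := if b = ε then 1 else -1

lemma stp_cases (ε b : Bool) : (b = ε ∧ stp ε b = 1) ∨ (b = !ε ∧ stp ε b = -1) := by
  cases ε <;> cases b <;> simp [stp]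

lemma core_bound {d : ℕ} (P : Measure (Config d)) (hP : IsBernoulliHalfProduct P)
    (x v : Site d) (hv : v ≠ 0) (ε : Bool) (N : ℕ) : ∀ (L k : ℕ) (f : Site d → Bool),
    P {γ | (∀ i < L, γ (x + (i : ℤ) • v) = f (x + (i : ℤ) • v)) ∧
      ∀ n ≤ N, 0 < (k : ℤ) + ∑ i ∈ Finset.range n, stp ε (γ (x + ((L + i : ℕ) : ℤ) • v))} ≤
      ENNReal.ofReal ((1 / 2) ^ L * wsurv N k) := by
  have hinj : ∀ i j : ℕ, x + (i : ℤ) • v = x + (j : ℤ) • v → i = j := by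
    intro i j h
    have h2 := smul_left_injective ℤ hv (add_left_cancel h)
    exact_mod_cast h2
  induction N with
  | zero =>
    intro L k f
    rcases k with _ | k
    · simp
    · rw [wsurv_zero_succ, mul_one]
      have h := hP.2 ((Finset.range L).image fun i : ℕ => x + (i : ℤ) • v) f
      rw [Finset.card_image_of_injective _ (fun i j h => hinj i j h), Finset.card_range] at h
      rw [ENNReal.ofReal_pow (by norm_num), ENNReal.ofReal_div_of_pos (by norm_num)]
      simp only [ENNReal.ofReal_one, ENNReal.ofReal_ofNat]
      rw [← h]
      refine measure_mono ?_
      rintro γ ⟨h1, -⟩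
      simpa using h1
  | succ N ih =>
    intro L k f
    rcases k with _ | k
    · refine le_trans (le_of_eq ?_) zero_le
      rw [← measure_empty (μ := P)]
      congr 1
      ext γ
      simp only [Set.mem_setOf_eq, Set.mem_empty_iff_false, iff_false, not_and]
      intro _ h
      simpa using h 0 (Nat.zero_le _)
    · have hA := ih (L + 1) (k + 2) (Function.update f (x + (L : ℤ) • v) ε)
      have hB := ih (L + 1) k (Function.update f (x + (L : ℤ) • v) (!ε))
      have hsum : ENNReal.ofReal ((1 / 2) ^ L * wsurv (N + 1) (k + 1)) =
          ENNReal.ofReal ((1 / 2) ^ (L + 1) * wsurv N (k + 2)) +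
          ENNReal.ofReal ((1 / 2) ^ (L + 1) * wsurv N k) := by
        rw [← ENNReal.ofReal_add (mul_nonneg (by positivity) (wsurv_nonneg _ _))
          (mul_nonneg (by positivity) (wsurv_nonneg _ _)), wsurv_succ]
        congr 1
        ring
      rw [hsum]
      refine le_trans ?_ (add_le_add hA hB)
      refine le_trans (measure_mono ?_) (measure_union_le _ _)
      rintro γ ⟨h1, h2⟩
      have hcyl : ∀ b, γ (x + (L : ℤ) • v) = b → ∀ i < L + 1, γ (x + (i : ℤ) • v) =
          Function.update f (x + (L : ℤ) • v) b (x + (i : ℤ) • v) := by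
        intro b hb i hi
        by_cases hiL : i = L
        · rw [hiL, Function.update_self, hb]
        · rw [Function.update_of_ne (fun h => hiL (hinj _ _ h))]
          exact h1 i (by omega)
      have hw : ∀ n ≤ N, 0 < ((k : ℤ) + 1) + (stp ε (γ (x + (L : ℤ) • v)) +
          ∑ i ∈ Finset.range n, stp ε (γ (x + ((L + 1 + i : ℕ) : ℤ) • v))) := by
        intro n hn
        have := h2 (n + 1) (by omega)
        rw [Finset.sum_range_succ'] at this
        simp only [Nat.add_zero] at this
        have e : ∀ i, L + 1 + i = L + (i + 1) := fun i => by omega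
        simp only [e]
        push_cast at this ⊢
        linarith
      rcases stp_cases ε (γ (x + (L : ℤ) • v)) with ⟨hb, e⟩ | ⟨hb, e⟩
      · left
        refine ⟨hcyl _ hb, fun n hn => ?_⟩
        have := hw n hn
        rw [e] at this
        push_cast at this ⊢
        linarith
      · right
        refine ⟨hcyl _ hb, fun n hn => ?_⟩
        have := hw n hn
        rw [e] at this
        push_cast at this ⊢
        linarith

/-! ### The matching -/

def dirv (d : ℕ) (b : Bool) : Site d := if b then e1 d else -e1 d

def Swalk {d : ℕ} (γ : Config d) (x : Site d) (n : ℕ) : ℤ :=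
  ∑ i ∈ Finset.range (n + 1), stp (γ x) (γ (x + (i : ℤ) • dirv d (γ x)))

lemma hit_ex {d : ℕ} (γ : Config d) (x : Site d) :
    ∃ n, Swalk γ x n = 0 ∨ ∀ m, Swalk γ x m ≠ 0 := by
  by_cases h : ∃ n, Swalk γ x n = 0
  · obtain ⟨n, hn⟩ := h; exact ⟨n, Or.inl hn⟩
  · push Not at h; exact ⟨0, Or.inr h⟩

open Classical in
def hitT {d : ℕ} (γ : Config d) (x : Site d) : ℕ := Nat.find (hit_ex γ x)

def PhiM {d : ℕ} (γ : Config d) (x : Site d) : Site d :=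
  x + (hitT γ x : ℤ) • dirv d (γ x)

lemma hitT_eq {d : ℕ} {γ : Config d} {x : Site d} {n : ℕ} (h0 : Swalk γ x n = 0)
    (h1 : ∀ m < n, Swalk γ x m ≠ 0) : hitT γ x = n := by
  classical
  unfold hitT
  rw [Nat.find_eq_iff]
  refine ⟨Or.inl h0, fun m hm => ?_⟩
  push Not
  exact ⟨h1 m hm, n, h0⟩

lemma hitT_lt {d : ℕ} {γ : Config d} {x : Site d} {m : ℕ} (h : m < hitT γ x) :
    Swalk γ x m ≠ 0 := by
  classical
  have := Nat.find_min (hit_ex γ x) h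
  push Not at this
  exact this.1

lemma hitT_spec {d : ℕ} {γ : Config d} {x : Site d} (h : ∃ n, Swalk γ x n = 0) :
    Swalk γ x (hitT γ x) = 0 := by
  classical
  rcases Nat.find_spec (hit_ex γ x) with h1 | h1
  · exact h1
  · obtain ⟨n, hn⟩ := h
    exact absurd hn (h1 n)

lemma Swalk_zero {d : ℕ} (γ : Config d) (x : Site d) : Swalk γ x 0 = 1 := by
  simp [Swalk, stp]

lemma Swalk_succ {d : ℕ} (γ : Config d) (x : Site d) (n : ℕ) : Swalk γ x (n + 1) =
    Swalk γ x n + stp (γ x) (γ (x + ((n + 1 : ℕ) : ℤ) • dirv d (γ x))) :=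
  Finset.sum_range_succ _ _

lemma stp_not (ε b : Bool) : stp (!ε) b = - stp ε b := by
  cases ε <;> cases b <;> simp [stp]

lemma dirv_not (d : ℕ) (b : Bool) : dirv d (!b) = - dirv d b := by
  cases b <;> simp [dirv]

lemma Swalk_pos {d : ℕ} (γ : Config d) (x : Site d) (n : ℕ) (h : ∀ m ≤ n, Swalk γ x m ≠ 0) :
    0 < Swalk γ x n := by
  induction n with
  | zero => rw [Swalk_zero]; norm_num
  | succ n ih =>
    have h1 := ih fun m hm => h m (by omega)
    have h2 := h (n + 1) le_rfl
    have h3 := Swalk_succ γ x n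
    rcases stp_cases (γ x) (γ (x + ((n + 1 : ℕ) : ℤ) • dirv d (γ x))) with ⟨-, e⟩ | ⟨-, e⟩ <;>
      rw [e] at h3 <;> omega

lemma match_aux {d : ℕ} {γ : Config d} {x : Site d} (h : ∃ n, Swalk γ x n = 0) :
    γ (PhiM γ x) = !(γ x) ∧ PhiM γ (PhiM γ x) = x := by
  have hs := hitT_spec h
  have hlt : ∀ m < hitT γ x, 0 < Swalk γ x m := fun m hm =>
    Swalk_pos γ x m fun j hj => hitT_lt (lt_of_le_of_lt hj hm)
  obtain ⟨n, hn⟩ : ∃ n, hitT γ x = n + 1 := by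
    rcases hh : hitT γ x with _ | n
    · rw [hh, Swalk_zero] at hs; norm_num at hs
    · exact ⟨n, rfl⟩
  rw [hn] at hs hlt
  have hy : PhiM γ x = x + ((n + 1 : ℕ) : ℤ) • dirv d (γ x) := by rw [PhiM, hn]
  have hS := Swalk_succ γ x n
  rw [hs] at hS
  have hpos := hlt n (by omega)
  rcases stp_cases (γ x) (γ (x + ((n + 1 : ℕ) : ℤ) • dirv d (γ x))) with ⟨e', e⟩ | ⟨e', e⟩
  · rw [e] at hS; omega
  rw [e] at hS
  rw [← hy] at e'
  refine ⟨e', ?_⟩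
  have hback : ∀ i j : ℕ, i + j = n + 1 → stp (γ (PhiM γ x))
      (γ (PhiM γ x + (i : ℤ) • dirv d (γ (PhiM γ x)))) =
      - stp (γ x) (γ (x + (j : ℤ) • dirv d (γ x))) := by
    intro i j hij
    rw [e', stp_not, dirv_not, hy]
    congr 3
    rw [← hij]
    push_cast
    rw [add_smul, smul_neg]
    abel
  have hrev : ∀ m j : ℕ, m + j = n → Swalk γ (PhiM γ x) m = Swalk γ x j := by
    intro m
    induction m with
    | zero => intro j hj; rw [Swalk_zero]; obtain rfl : j = n := by omega
              omega
    | succ m ih =>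
      intro j hj
      rw [Swalk_succ, ih (j + 1) (by omega), Swalk_succ, hback (m + 1) (j + 1) (by omega)]
      ring
  have hT : hitT γ (PhiM γ x) = n + 1 := by
    apply hitT_eq
    · rw [Swalk_succ, hrev n 0 (by omega), hback (n + 1) 0 (by omega), Swalk_zero]
      simp [stp]
    · intro m hm
      rw [hrev m (n - m) (by omega)]
      exact (hlt _ (by omega)).ne'
  conv_lhs => rw [PhiM, hT, e', dirv_not, hy]
  simp

lemma isMatching_of {d : ℕ} {γ : Config d} (h : ∀ x, ∃ n, Swalk γ x n = 0) :
    IsMatching γ (PhiM γ) :=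
  have hi : Function.Involutive (PhiM γ) := fun x => (match_aux (h x)).2
  ⟨hi.bijective, hi, fun x => (match_aux (h x)).1⟩

lemma e1_ne {d : ℕ} (hd : 1 ≤ d) : e1 d ≠ 0 := by
  intro h
  have := congrFun h ⟨0, hd⟩
  simp [e1] at this

lemma dirv_ne {d : ℕ} (hd : 1 ≤ d) (b : Bool) : dirv d b ≠ 0 := by
  have := e1_ne hd
  cases b <;> simp [dirv, this]

lemma unmatched_bound {d : ℕ} (hd : 1 ≤ d) (P : Measure (Config d))
    (hP : IsBernoulliHalfProduct P) (x : Site d) (N : ℕ) :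
    P {γ | ∀ n ≤ N, Swalk γ x n ≠ 0} ≤ ENNReal.ofReal (wsurv N 1) := by
  have hA := fun b : Bool => core_bound P hP x (dirv d b) (dirv_ne hd b) b N 1 1 (fun _ => b)
  have hsum : ENNReal.ofReal (wsurv N 1) =
      ENNReal.ofReal ((1 / 2) ^ 1 * wsurv N 1) + ENNReal.ofReal ((1 / 2) ^ 1 * wsurv N 1) := by
    rw [← ENNReal.ofReal_add (mul_nonneg (by positivity) (wsurv_nonneg _ _))
      (mul_nonneg (by positivity) (wsurv_nonneg _ _))]
    congr 1
    ring
  rw [hsum]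
  refine le_trans ?_ (add_le_add (hA true) (hA false))
  refine le_trans (measure_mono ?_) (measure_union_le _ _)
  intro γ hγ
  have key : ∀ b, γ x = b → γ ∈ {γ : Config d | (∀ i < (1 : ℕ), γ (x + (i : ℤ) • dirv d b) = b) ∧
      ∀ n ≤ N, 0 < ((1 : ℕ) : ℤ) +
        ∑ i ∈ Finset.range n, stp b (γ (x + ((1 + i : ℕ) : ℤ) • dirv d b))} := by
    intro b hb
    refine ⟨fun i hi => ?_, fun n hn => ?_⟩
    · obtain rfl : i = 0 := by omega
      simpa using hb
    · have := Swalk_pos γ x n fun m hm => hγ m (hm.trans hn)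
      rw [Swalk, Finset.sum_range_succ', hb] at this
      simp only [Nat.cast_zero, zero_smul, add_zero, hb] at this
      have e : stp b b = 1 := by simp [stp]
      rw [e, add_comm] at this
      simpa [add_comm] using this
  cases hb : γ x
  · right; exact key _ hb
  · left; exact key _ hb

lemma ae_hit {d : ℕ} (hd : 1 ≤ d) (P : Measure (Config d))
    (hP : IsBernoulliHalfProduct P) : ∀ᵐ γ ∂P, ∀ x, ∃ n, Swalk γ x n = 0 := by
  rw [ae_all_iff]
  intro x
  rw [ae_iff]
  have hle : ∀ m : ℕ, P {γ | ¬ ∃ n, Swalk γ x n = 0} ≤ ENNReal.ofReal (1 / √(2 * m + 1)) := by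
    intro m
    refine le_trans (measure_mono ?_) ((unmatched_bound hd P hP x (2 * m)).trans
      (ENNReal.ofReal_le_ofReal (wsurv_bound m)))
    intro γ hγ n _ h
    exact hγ ⟨n, h⟩
  have hlim : Filter.Tendsto (fun m : ℕ => ENNReal.ofReal (1 / √(2 * m + 1))) Filter.atTop
      (nhds 0) := by
    rw [← ENNReal.ofReal_zero]
    refine ENNReal.tendsto_ofReal ?_
    refine Filter.Tendsto.div_atTop tendsto_const_nhds ?_
    refine Real.tendsto_sqrt_atTop.comp ?_
    refine Filter.tendsto_atTop_add_const_right _ _ ?_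
    exact tendsto_natCast_atTop_atTop.const_mul_atTop (by norm_num)
  exact le_antisymm (ge_of_tendsto' hlim hle) zero_le

lemma measurable_Swalk {d : ℕ} (x : Site d) (n : ℕ) :
    Measurable fun γ : Config d => Swalk γ x n := by
  unfold Swalk
  refine Finset.measurable_sum _ fun i _ => ?_
  have h : ∀ b, Measurable fun γ : Config d => stp b (γ (x + (i : ℤ) • dirv d b)) := fun b =>
    (measurable_of_finite (stp b)).comp (measurable_pi_apply _)
  have e : (fun γ : Config d => stp (γ x) (γ (x + (i : ℤ) • dirv d (γ x)))) =
      fun γ => if γ x = true then stp true (γ (x + (i : ℤ) • dirv d true)) else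
        stp false (γ (x + (i : ℤ) • dirv d false)) := by
    funext γ
    cases hb : γ x <;> simp
  rw [e]
  have hm : MeasurableSet {γ : Config d | γ x = true} :=
    (measurable_pi_apply (X := fun _ : Site d => Bool) x) (measurableSet_singleton true)
  exact Measurable.ite hm (h _) (h _)

lemma measurable_PhiM {d : ℕ} (x : Site d) : Measurable fun γ : Config d => PhiM γ x := by
  classical
  have h0 : ∀ n, MeasurableSet {γ : Config d | Swalk γ x n = 0} := fun n =>
    measurable_Swalk x n (measurableSet_singleton 0)
  have hT : Measurable fun γ : Config d => hitT γ x := by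
    have : (fun γ : Config d => hitT γ x) = fun γ => Nat.find (hit_ex γ x) := by
      funext γ; unfold hitT; congr
    rw [this]
    refine measurable_find _ fun n => ?_
    have : {γ : Config d | Swalk γ x n = 0 ∨ ∀ m, Swalk γ x m ≠ 0} =
        {γ | Swalk γ x n = 0} ∪ ⋂ m, {γ | Swalk γ x m = 0}ᶜ := by
      ext γ; simp
    rw [this]
    exact (h0 n).union (MeasurableSet.iInter fun m => (h0 m).compl)
  have hpair : Measurable fun γ : Config d => (hitT γ x, γ x) := hT.prodMk (measurable_pi_apply x)
  exact (measurable_of_countable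
    (fun q : ℕ × Bool => x + (q.1 : ℤ) • dirv d q.2)).comp hpair

lemma equivariant_PhiM {d : ℕ} (z x : Site d) (γ : Config d) :
    PhiM (shiftCfg z γ) (x + z) = PhiM γ x + z := by
  have hx : ∀ u : Site d, shiftCfg z γ (x + z + u) = γ (x + u) := by
    intro u
    unfold shiftCfg
    congr 1
    abel
  have hx0 : shiftCfg z γ (x + z) = γ x := by simp [shiftCfg]
  have hS : ∀ n, Swalk (shiftCfg z γ) (x + z) n = Swalk γ x n := by
    intro n
    simp only [Swalk, hx, hx0]
  have hT : hitT (shiftCfg z γ) (x + z) = hitT γ x := by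
    unfold hitT
    congr 1
    funext n
    simp only [hS]
  rw [PhiM, PhiM, hT, hx0]
  abel

lemma norm_PhiM_le {d : ℕ} (γ : Config d) : ‖PhiM γ 0‖ ≤ hitT γ 0 := by
  rw [pi_norm_le_iff_of_nonneg (by positivity)]
  intro i
  have h : |dirv d (γ 0) i| ≤ 1 := by
    cases γ 0 <;> simp [dirv, e1] <;> split_ifs <;> simp
  have h' : |((dirv d (γ 0) i : ℤ) : ℝ)| ≤ 1 := by exact_mod_cast h
  simp only [PhiM, zero_add, Pi.smul_apply, smul_eq_mul, Int.norm_eq_abs]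
  push_cast
  rw [abs_mul, Nat.abs_cast]
  exact mul_le_of_le_one_right (by positivity) h'

/-- For every `d ≥ 1` there exist `c = c(d) < ∞` and a translation-equivariant matching
rule `Φ` such that `ℙ(Z_Φ > r) ≤ c r^{-1/2}` for all `r > 0`. -/
theorem statement2 (d : ℕ) (hd : 1 ≤ d)
    (P : Measure (Config d)) (hP : IsBernoulliHalfProduct P) :
    ∃ (c : ℝ) (Φ : Config d → Site d → Site d),
      IsMatchingRule P Φ ∧ IsEquivariant P Φ ∧
        ∀ r : ℝ, 0 < r →
          P {γ | r < ZΦ Φ γ} ≤ ENNReal.ofReal (c * r ^ (-(1 / 2) : ℝ)) := by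
  refine ⟨2, PhiM, ⟨measurable_PhiM, ?_⟩, ?_, ?_⟩
  · filter_upwards [ae_hit hd P hP] with γ hγ
    exact isMatching_of hγ
  · intro z x
    exact Filter.Eventually.of_forall fun γ => equivariant_PhiM z x γ
  · intro r hr
    set m := ⌊r / 2⌋₊ with hm
    have hm1 : (m : ℝ) ≤ r / 2 := Nat.floor_le (by positivity)
    have hm2 : r / 2 < m + 1 := Nat.lt_floor_add_one _
    refine le_trans (measure_mono ?_) ((unmatched_bound hd P hP 0 (2 * m)).trans
      (ENNReal.ofReal_le_ofReal ((wsurv_bound m).trans ?_)))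
    · intro γ hγ n hn
      have h1 : r < hitT γ 0 := lt_of_lt_of_le hγ (norm_PhiM_le γ)
      refine hitT_lt ?_
      have hn' : (n : ℝ) ≤ 2 * m := by exact_mod_cast hn
      have : (n : ℝ) < hitT γ 0 := by linarith
      exact_mod_cast this
    · rw [Real.rpow_neg hr.le, ← Real.sqrt_eq_rpow, ← div_eq_mul_inv,
        div_le_div_iff₀ (by positivity) (by positivity), one_mul]
      have h2 : √r ≤ √(2 ^ 2 * (2 * m + 1)) := Real.sqrt_le_sqrt (by linarith)
      rwa [Real.sqrt_mul (by positivity), Real.sqrt_sq (by norm_num)] at h2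

end
end
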